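/- There is an absolute constant A such that for every n ≥ 2, the mixing time of the lazy triangulation flip walk on the triangulations of the convex (n+2)-gon is at most A·n^3·(log n)^3; that is, for every integer t ≥ A·n^3·(log n)^3 and every starting triangulation x, the total variation distance between the distribution of the walk after t steps (row x of P^t) and the uniform distribution on all triangulations is at most 1/4. -/

import Mathlib

open Finset

/-- `x` lies strictly between `a` and `b` in cyclic (counterclockwise) order
on the vertices `0, 1, …, m-1` of a convex `m`-gon. -/
def CycBtw {m : ℕ} (a b x : Fin m) : Prop :=
  0 < (x - a).val ∧ (x - a).val < (b - a).val

/-- `a` and `b` are adjacent (cyclically consecutive) vertices of the convex `m`-gon. -/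
def PolyAdj {m : ℕ} (a b : Fin m) : Prop :=
  (b - a).val = 1 ∨ (a - b).val = 1

/-- `e` is a side of the convex `m`-gon. -/
def IsSide {m : ℕ} (e : Sym2 (Fin m)) : Prop :=
  ∃ a b : Fin m, e = s(a, b) ∧ PolyAdj a b

/-- `e` is a diagonal of the convex `m`-gon: a pair of distinct non-adjacent vertices. -/
def IsDiagonal {m : ℕ} (e : Sym2 (Fin m)) : Prop :=
  ¬ e.IsDiag ∧ ∀ a b : Fin m, e = s(a, b) → ¬ PolyAdj a b

/-- Two chords cross iff exactly one endpoint of one lies strictly between the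
endpoints of the other (for every representation of the endpoints). -/
def Crosses {m : ℕ} (e f : Sym2 (Fin m)) : Prop :=
  ∀ a b : Fin m, e = s(a, b) →
    ∃ c d : Fin m, f = s(c, d) ∧ Xor' (CycBtw a b c) (CycBtw a b d)

/-- A triangulation of the convex `(n+2)`-gon: a maximal set of pairwise
non-crossing diagonals. -/
def IsTriangulation (n : ℕ) (t : Finset (Sym2 (Fin (n + 2)))) : Prop :=
  (∀ e ∈ t, IsDiagonal e) ∧
  (∀ e ∈ t, ∀ f ∈ t, ¬ Crosses e f) ∧
  (∀ e, IsDiagonal e → (∀ f ∈ t, ¬ Crosses e f) → e ∈ t)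

/-- The type of triangulations of the convex `(n+2)`-gon. -/
def Triangulation (n : ℕ) : Type :=
  {t : Finset (Sym2 (Fin (n + 2))) // IsTriangulation n t}

instance (n : ℕ) : DecidableEq (Triangulation n) := fun a b =>
  decidable_of_iff (a.val = b.val) Subtype.ext_iff.symm

noncomputable instance (n : ℕ) : Fintype (Triangulation n) := by
  classical exact Subtype.fintype _

/-- The associahedron graph `K_n`: vertices are the triangulations of the convex
`(n+2)`-gon, with an edge between two triangulations iff they differ in exactly
one diagonal (a flip). -/
def assocGraph (n : ℕ) : SimpleGraph (Triangulation n) where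
  Adj s t := (s.val \ t.val).card = 1 ∧ (t.val \ s.val).card = 1
  symm := ⟨fun s t h => ⟨h.2, h.1⟩⟩
  loopless := ⟨fun s h => by simp at h⟩

/-- The set of edges of `G` with exactly one endpoint in `S`. -/
def edgeBoundary {V : Type*} (G : SimpleGraph V) (S : Set V) : Set (Sym2 V) :=
  {e | e ∈ G.edgeSet ∧ ∃ u v : V, e = s(u, v) ∧ u ∈ S ∧ v ∉ S}

open Classical in
/-- The transition matrix of the lazy triangulation flip walk on `K_n`:
from a triangulation, with probability 1/2 stay put, otherwise pick one of the
`n - 1` diagonals uniformly at random and flip it. -/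
noncomputable def flipWalkMatrix (n : ℕ) :
    Matrix (Triangulation n) (Triangulation n) ℝ := fun s t =>
  if (assocGraph n).Adj s t then 1 / (2 * ((n : ℝ) - 1))
  else if s = t then 1 / 2 else 0



namespace FlipWalk

/-- Words with `n` letters `true` and `n+k` letters `false`, first reaching level `-k` at the end. -/
def F : ℕ → ℕ → Finset (List Bool)
  | 0, k => {List.replicate k false}
  | _ + 1, 0 => ∅
  | n + 1, k + 1 => (F (n + 1) k).image (List.cons false) ∪ (F n (k + 2)).image (List.cons true)
termination_by n k => (n, k)

/-- Words following a head pattern `01` in a state `(n+1, k+1)`. -/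
def CS (n : ℕ) : ℕ → Finset (List Bool)
  | 0 => ∅
  | k + 1 => F n (k + 2)

/-- Insert `false` after the first `d` complete trees of a word. -/
def ins : ℕ → List Bool → List Bool
  | 0, w => false :: w
  | _ + 1, [] => [false]
  | d + 1, false :: w => false :: ins d w
  | d + 1, true :: w => true :: ins (d + 2) w

/-- Prepend a letter to both words of a pair. -/
def cons2 (b : Bool) (p : List Bool × List Bool) : List Bool × List Bool := (b :: p.1, b :: p.2)

/-- The flip attached to a head pattern. -/
def headFlip (v : List Bool) : List Bool × List Bool :=
  (false :: true :: v, true :: ins 1 v)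

/-- Flip pairs among the words of `F n k`. -/
def FP : ℕ → ℕ → Finset (List Bool × List Bool)
  | 0, _ => ∅
  | _ + 1, 0 => ∅
  | n + 1, k + 1 => (FP (n + 1) k).image (cons2 false) ∪
      ((FP n (k + 2)).image (cons2 true) ∪ (CS n k).image headFlip)
termination_by n k => (n, k)

lemma F_zero (k : ℕ) : F 0 k = {List.replicate k false} := by rw [F]
lemma F_succ_zero (n : ℕ) : F (n+1) 0 = ∅ := by rw [F]
lemma F_succ_succ (n k : ℕ) : F (n+1) (k+1) =
    (F (n + 1) k).image (List.cons false) ∪ (F n (k + 2)).image (List.cons true) := by rw [F]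
lemma FP_zero (k : ℕ) : FP 0 k = ∅ := by rw [FP]
lemma FP_succ_zero (n : ℕ) : FP (n+1) 0 = ∅ := by rw [FP]
lemma FP_succ_succ (n k : ℕ) : FP (n+1) (k+1) = (FP (n + 1) k).image (cons2 false) ∪
      ((FP n (k + 2)).image (cons2 true) ∪ (CS n k).image headFlip) := by rw [FP]

/-- Double induction along the recursion. -/
lemma ind2 {Q : ℕ → ℕ → Prop} (h0 : ∀ k, Q 0 k) (h1 : ∀ n, Q (n+1) 0)
    (h2 : ∀ n k, Q (n+1) k → Q n (k+2) → (∀ k', Q n k') → Q (n+1) (k+1)) : ∀ n k, Q n k := by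
  intro n
  induction n with
  | zero => exact h0
  | succ n ih =>
    intro k
    induction k with
    | zero => exact h1 n
    | succ k ihk => exact h2 n k ihk (ih _) ih

lemma sum_F_succ (n k : ℕ) (f : List Bool → ℝ) :
    ∑ w ∈ F (n+1) (k+1), f w
      = ∑ w ∈ F (n+1) k, f (false :: w) + ∑ w ∈ F n (k+2), f (true :: w) := by
  rw [F_succ_succ, Finset.sum_union, Finset.sum_image, Finset.sum_image]
  · intro a _ b _ h; simpa using h
  · intro a _ b _ h; simpa using h
  · rw [Finset.disjoint_left]; intro a ha hb
    simp only [Finset.mem_image] at ha hb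
    obtain ⟨x, _, rfl⟩ := ha
    obtain ⟨y, _, hy⟩ := hb
    simp at hy

lemma sum_F_zero (k : ℕ) (f : List Bool → ℝ) :
    ∑ w ∈ F 0 k, f w = f (List.replicate k false) := by
  rw [F_zero, Finset.sum_singleton]

lemma sum_FP_succ (n k : ℕ) (f : List Bool × List Bool → ℝ) :
    ∑ p ∈ FP (n+1) (k+1), f p
      = ∑ p ∈ FP (n+1) k, f (cons2 false p) + (∑ p ∈ FP n (k+2), f (cons2 true p)
        + ∑ v ∈ CS n k, f (headFlip v)) := by
  rw [FP_succ_succ, Finset.sum_union, Finset.sum_union, Finset.sum_image, Finset.sum_image,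
    Finset.sum_image]
  · intro a _ b _ h; simp [headFlip] at h; exact h.1
  · rintro ⟨a, a'⟩ _ ⟨b, b'⟩ _ h; simpa [cons2] using h
  · rintro ⟨a, a'⟩ _ ⟨b, b'⟩ _ h; simpa [cons2] using h
  · rw [Finset.disjoint_left]; intro a ha hb
    simp only [Finset.mem_image] at ha hb
    obtain ⟨x, _, rfl⟩ := ha
    obtain ⟨y, _, hy⟩ := hb
    simp [cons2, headFlip] at hy
  · rw [Finset.disjoint_left]; intro a ha hb
    simp only [Finset.mem_image, Finset.mem_union] at ha hb
    obtain ⟨x, _, rfl⟩ := ha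
    rcases hb with ⟨y, _, hy⟩ | ⟨y, _, hy⟩
    · simp [cons2] at hy
    · simp [cons2, headFlip] at hy

/-- The cardinality of `F n k` as a real number. -/
noncomputable def N (n k : ℕ) : ℝ := ((F n k).card : ℝ)

lemma N_eq_sum (n k : ℕ) : N n k = ∑ _w ∈ F n k, (1:ℝ) := by simp [N]

lemma N_zero (k : ℕ) : N 0 k = 1 := by simp [N, F_zero]
lemma N_succ_zero (n : ℕ) : N (n+1) 0 = 0 := by simp [N, F_succ_zero]
lemma N_succ (n k : ℕ) : N (n+1) (k+1) = N (n+1) k + N n (k+2) := by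
  simp only [N_eq_sum, sum_F_succ]

lemma N_formula (n k : ℕ) : N n (k+1) * ((n.factorial : ℝ) * ((n+k+1).factorial : ℝ))
    = (k+1) * ((2*n+k).factorial : ℝ) := by
  revert n k
  intro n
  induction n with
  | zero => intro k; simp [N_zero, Nat.factorial_succ]
  | succ n ih =>
    intro k
    induction k with
    | zero =>
      have h := ih 1
      rw [N_succ, N_succ_zero, zero_add]
      have e1 : (n + 1 + 0 + 1) = n + 1 + 1 := by ring
      have e2 : 2 * (n+1) + 0 = 2*n + 1 + 1 := by ring
      rw [e1, e2, Nat.factorial_succ (2*n+1)]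
      rw [Nat.factorial_succ n]
      push_cast at h ⊢
      linear_combination (n+1) * h
    | succ k ihk =>
      have h := ih (k+2)
      rw [N_succ]
      have e0 : n + 1 + k + 1 = n + k + 2 := by ring
      have e1 : n + 1 + (k+1) + 1 = n + k + 2 + 1 := by ring
      have e2 : 2 * (n+1) + (k+1) = 2*n+k+2 + 1 := by ring
      have e3 : n + (k+2) + 1 = n + k + 2 + 1 := by ring
      have e4 : 2*n+(k+2) = 2*n+k+2 := by ring
      have e5 : 2*(n+1)+k = 2*n+k+2 := by ring
      rw [e0, e5] at ihk
      rw [e3, e4] at h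
      rw [e1, e2, Nat.factorial_succ (2*n+k+2)]
      have hh : (((n+k+2+1).factorial : ℕ):ℝ) = (n+k+2+1) * ((n+k+2).factorial : ℝ) := by
        rw [Nat.factorial_succ]; push_cast; ring
      have hn : (((n+1).factorial : ℕ):ℝ) = (n+1) * ((n).factorial : ℝ) := by
        rw [Nat.factorial_succ]; push_cast; ring
      rw [hh] at h ⊢
      rw [hn] at ihk ⊢
      push_cast at h ihk ⊢
      linear_combination (n+k+2+1) * ihk + (n+1) * h

lemma N_pos (n k : ℕ) : 0 < N n (k+1) := by
  have h := N_formula n k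
  have h1 : (0:ℝ) < (n.factorial : ℝ) * ((n+k+1).factorial : ℝ) := by positivity
  have h2 : (0:ℝ) < (k+1) * ((2*n+k).factorial : ℝ) := by positivity
  rw [← h] at h2
  exact (mul_pos_iff_of_pos_right h1).mp h2

lemma N_nonneg (n k : ℕ) : 0 ≤ N n k := by simp [N]

/-- Ratio of the `false` slice. -/
lemma ratio0 (n k : ℕ) : ((k:ℝ)+1) * (2*n+k) * N n k = k * (n+k+1) * N n (k+1) := by
  rcases k with _ | k
  · rcases n with _ | n
    · simp
    · simp [N_succ_zero]
  · have h1 := N_formula n k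
    have h2 := N_formula n (k+1)
    have hh : (((n+(k+1)+1).factorial : ℕ):ℝ) = (n+k+1+1) * ((n+k+1).factorial : ℝ) := by
      have : n+(k+1)+1 = n+k+1+1 := by ring
      rw [this, Nat.factorial_succ]; push_cast; ring
    have hn : (((2*n+(k+1)).factorial : ℕ):ℝ) = (2*n+k+1) * ((2*n+k).factorial : ℝ) := by
      have : 2*n+(k+1) = 2*n+k+1 := by ring
      rw [this, Nat.factorial_succ]; push_cast; ring
    rw [hh, hn] at h2
    have h0 : (n.factorial : ℝ) * ((n+k+1).factorial : ℝ) ≠ 0 := by positivity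
    apply mul_right_cancel₀ h0
    push_cast at *
    linear_combination (k+1+1) * (2*n+(k+1)) * h1 - (k+1) * h2

/-- Ratio of the `true` slice. -/
lemma ratio1 (n k : ℕ) : ((k:ℝ)+1) * (2*n+2+k) * N n (k+2) = (n+1) * (k+2) * N (n+1) (k+1) := by
  have h0 := ratio0 (n+1) k
  have h := N_succ n k
  push_cast at h0
  have e : N n (k+2) = N (n+1) (k+1) - N (n+1) k := by linarith
  rw [e]
  linear_combination -h0

lemma N_logconc (n k : ℕ) : N (n+1) k * N n (k+2) ≤ N (n+1) (k+1) * N n (k+1) := by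
  have h1 := ratio0 (n+1) k
  have h2 := ratio0 n (k+1)
  push_cast at h1 h2
  have p1 := N_pos (n+1) k
  have p2 := N_pos n (k+1)
  have p3 := N_pos n k
  have q1 := N_nonneg (n+1) k
  have e1 : N (n+1) k = k * (n+1+k+1) / ((k+1) * (2*(n+1)+k)) * N (n+1) (k+1) := by
    field_simp; linarith
  have e2 : N n (k+1) = (k+1) * (n+(k+1)+1) / ((k+1+1) * (2*n+(k+1))) * N n (k+2) := by
    field_simp; linarith
  rw [e1, e2]
  have key : (k:ℝ) * (n+1+k+1) / ((k+1) * (2*(n+1)+k))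
      ≤ (k+1) * (n+(k+1)+1) / ((k+1+1) * (2*n+(k+1))) := by
    rw [div_le_div_iff₀ (by positivity) (by positivity)]
    have a : (0:ℝ) ≤ n := by positivity
    have b : (0:ℝ) ≤ k := by positivity
    have : (k:ℝ) * ((k+1+1) * (2*n+(k+1))) ≤ (k+1) * ((k+1) * (2*(n+1)+k)) := by nlinarith [mul_nonneg a b]
    nlinarith [mul_le_mul_of_nonneg_left this (by positivity : (0:ℝ) ≤ n+1+k+1)]
  have := mul_le_mul_of_nonneg_right key (mul_pos p1 p2).le
  nlinarith

lemma N_ratio_a (n k : ℕ) : N n (k+2) ≤ 4 * N n (k+1) := by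
  have h := ratio0 n (k+1)
  push_cast at h
  have p2 := N_pos n (k+1)
  have p3 := N_pos n k
  have a : (0:ℝ) ≤ n := by positivity
  have b : (0:ℝ) ≤ k := by positivity
  have : ((k:ℝ)+1) * (n+(k+1)+1) * N n (k+2) ≤ (k+1) * (n+(k+1)+1) * (4 * N n (k+1)) := by
    change _ * N n (k+1+1) ≤ _
    rw [← h]
    have : ((k:ℝ)+1+1) * (2*n+(k+1)) ≤ (k+1) * (n+(k+1)+1) * 4 := by nlinarith [mul_nonneg a b]
    nlinarith
  exact le_of_mul_le_mul_left this (by positivity)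

lemma N_ratio_b (n k : ℕ) : (n+1) * N (n+1) (k+1) ≤ (2*n+2+k) * N n (k+2) := by
  have h := ratio1 n k
  have p := N_pos (n+1) k
  have a : (0:ℝ) ≤ n := by positivity
  have b : (0:ℝ) ≤ k := by positivity
  have : ((k:ℝ)+1) * ((n+1) * N (n+1) (k+1)) ≤ (k+1) * ((2*n+2+k) * N n (k+2)) := by
    nlinarith [mul_nonneg a p.le]
  exact le_of_mul_le_mul_left this (by positivity)

lemma N_le_pow (n k : ℕ) : N n k ≤ 2 ^ (2*n+k) := by
  revert n k
  apply ind2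
  · intro k; rw [N_zero]; exact one_le_pow₀ (by norm_num)
  · intro n; rw [N_succ_zero]; positivity
  · intro n k h1 h2 _
    rw [N_succ]
    have : (2:ℝ) ^ (2*(n+1)+(k+1)) = 2 ^ (2*(n+1)+k) + 2 ^ (2*n+(k+2)) := by ring
    rw [this]; exact add_le_add h1 h2

end FlipWalk


namespace FlipWalk

/-- Total variation of `h` along swaps `01 ↔ 10`. -/
def SW : ℕ → ℕ → (List Bool → ℝ) → ℝ
  | 0, _, _ => 0
  | _ + 1, 0, _ => 0
  | n + 1, k + 1, h => SW (n+1) k (fun w => h (false :: w)) + SW n (k+2) (fun w => h (true :: w))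
      + ∑ v ∈ CS n k, |h (false :: true :: v) - h (true :: false :: v)|
termination_by n k _ => (n, k)

lemma SW_zero (k : ℕ) (h : List Bool → ℝ) : SW 0 k h = 0 := by rw [SW]
lemma SW_succ_zero (n : ℕ) (h : List Bool → ℝ) : SW (n+1) 0 h = 0 := by rw [SW]
lemma SW_succ (n k : ℕ) (h : List Bool → ℝ) : SW (n+1) (k+1) h =
    SW (n+1) k (fun w => h (false :: w)) + SW n (k+2) (fun w => h (true :: w))
      + ∑ v ∈ CS n k, |h (false :: true :: v) - h (true :: false :: v)| := by rw [SW]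

lemma SW_nonneg (n k : ℕ) : ∀ h, 0 ≤ SW n k h := by
  revert n k
  apply ind2
  · intro k h; rw [SW_zero]
  · intro n h; rw [SW_succ_zero]
  · intro n k h1 h2 _ h
    rw [SW_succ]
    have : 0 ≤ ∑ v ∈ CS n k, |h (false :: true :: v) - h (true :: false :: v)| :=
      Finset.sum_nonneg (fun _ _ => abs_nonneg _)
    linarith [h1 (fun w => h (false :: w)), h2 (fun w => h (true :: w))]

lemma avg_aux {A B a b s m : ℝ} (ha : 0 < a) (hb : 0 < b) (hm : 0 < m) (hs : 0 ≤ s)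
    (h : |A / a - B / b| ≤ s / m) (hl : a * b ≤ (a + b) * m) :
    |(A + B) / (a + b) - B / b| ≤ s / b := by
  have e : (A + B) / (a + b) - B / b = (a / (a+b)) * (A / a - B / b) := by
    field_simp; ring
  rw [e, abs_mul, abs_of_pos (by positivity : 0 < a / (a+b))]
  calc a / (a+b) * |A / a - B / b| ≤ a / (a+b) * (s / m) := by gcongr
    _ = (a * b) * s / ((a + b) * m * b) := by field_simp
    _ ≤ ((a+b) * m) * s / ((a + b) * m * b) := by gcongr
    _ = s / b := by field_simp

/-- The slice comparison in the state `(n+1, k+2)`. -/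
def SliceQ (n k : ℕ) : Prop := ∀ h : List Bool → ℝ,
    |(∑ w ∈ F (n+1) (k+1), h (false :: w)) / N (n+1) (k+1)
      - (∑ w ∈ F n (k+3), h (true :: w)) / N n (k+3)| ≤ SW (n+1) (k+2) h / N n (k+2)

lemma sliceA (n k : ℕ) (hk : ∀ k', k = k' + 1 → SliceQ n k') (h : List Bool → ℝ) :
    |(∑ w ∈ F (n+1) (k+1), h w) / N (n+1) (k+1)
      - (∑ w ∈ F n (k+2), h (true :: w)) / N n (k+2)| ≤ SW (n+1) (k+1) h / N n (k+2) := by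
  rcases k with _ | k
  · rw [sum_F_succ, N_succ, F_succ_zero, N_succ_zero]
    simp only [Finset.sum_empty, zero_add, sub_self, abs_zero]
    exact div_nonneg (SW_nonneg _ _ _) (N_nonneg _ _)
  · have ih := hk k rfl h
    rw [sum_F_succ, N_succ]
    refine avg_aux (N_pos _ _) (N_pos _ _) (N_pos n (k+1)) (SW_nonneg _ _ _) ih ?_
    have := N_logconc n (k+1)
    rwa [N_succ n (k+1)] at this

lemma sliceB (n k : ℕ) (hk : ∀ n', n = n' + 1 → SliceQ n' (k+1)) (h : List Bool → ℝ) :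
    |(∑ w ∈ F n (k+3), h w) / N n (k+3)
      - (∑ w ∈ F n (k+2), h (false :: w)) / N n (k+2)| ≤ SW n (k+3) h / N n (k+2) := by
  rcases n with _ | n
  · rw [sum_F_zero, sum_F_zero, N_zero, N_zero, SW_zero]
    simp [List.replicate_succ]
  · have ih := hk n rfl h
    rw [sum_F_succ, N_succ, add_comm (∑ w ∈ F (n+1) (k+2), _), add_comm (N (n+1) (k+2))]
    rw [abs_sub_comm] at ih
    refine avg_aux (N_pos _ _) (N_pos _ _) (N_pos n (k+2)) (SW_nonneg _ _ _) ih ?_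
    have := N_logconc n (k+2)
    rw [N_succ n (k+2)] at this
    linarith [this]

lemma slice_step (n k : ℕ) (h1 : ∀ k', k = k' + 1 → SliceQ n k')
    (h2 : ∀ n', n = n' + 1 → SliceQ n' (k+1)) : SliceQ n k := by
  intro h
  have a := sliceA n k h1 (fun w => h (false :: w))
  have b := sliceB n k h2 (fun w => h (true :: w))
  have p := N_pos n (k+1)
  have c : |(∑ w ∈ F n (k+2), h (false :: true :: w)) / N n (k+2)
      - (∑ w ∈ F n (k+2), h (true :: false :: w)) / N n (k+2)| ≤
      (∑ v ∈ CS n (k+1), |h (false :: true :: v) - h (true :: false :: v)|) / N n (k+2) := by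
    rw [← sub_div, abs_div, abs_of_pos p, ← Finset.sum_sub_distrib]
    gcongr
    exact Finset.abs_sum_le_sum_abs _ _
  rw [SW_succ, add_div, add_div]
  rw [abs_le] at a b c ⊢
  constructor <;> linarith [a.1, a.2, b.1, b.2, c.1, c.2]

/-- The averages over the two slices differ by at most the normalised swap variation. -/
lemma slice_avg (n : ℕ) : ∀ k, SliceQ n k := by
  induction n with
  | zero =>
    intro k
    induction k with
    | zero => exact slice_step _ _ (by intro _ h; omega) (by intro _ h; omega)
    | succ k ihk =>
      exact slice_step _ _ (by intro k' h; obtain rfl : k' = k := by omega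
                               exact ihk) (by intro _ h; omega)
  | succ n ihn =>
    intro k
    induction k with
    | zero => exact slice_step _ _ (by intro _ h; omega)
                (by intro n' h; obtain rfl : n' = n := by omega
                    exact ihn _)
    | succ k ihk =>
      exact slice_step _ _ (by intro k' h; obtain rfl : k' = k := by omega
                               exact ihk)
                (by intro n' h; obtain rfl : n' = n := by omega
                    exact ihn _)

end FlipWalk


namespace FlipWalk

/-- Variation along flips. -/
noncomputable def X1 (n k : ℕ) (h : List Bool → ℝ) : ℝ := ∑ p ∈ FP n k, |h p.1 - h p.2|

lemma X1_zero (k : ℕ) (h : List Bool → ℝ) : X1 0 k h = 0 := by simp [X1, FP_zero]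
lemma X1_succ_zero (n : ℕ) (h : List Bool → ℝ) : X1 (n+1) 0 h = 0 := by simp [X1, FP_succ_zero]
lemma X1_succ (n k : ℕ) (h : List Bool → ℝ) : X1 (n+1) (k+1) h =
    X1 (n+1) k (fun w => h (false :: w)) + (X1 n (k+2) (fun w => h (true :: w))
      + ∑ v ∈ CS n k, |h (false :: true :: v) - h (true :: ins 1 v)|) := by
  simp only [X1, sum_FP_succ, cons2, headFlip]

/-- Variation along the flips moving the `d`-th zero. -/
def Pd : ℕ → ℕ → ℕ → (List Bool → ℝ) → ℝ
  | 0, _, _, _ => 0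
  | _ + 1, 0, _, _ => 0
  | n + 1, k + 1, 0, h => ∑ v ∈ CS n k, |h (false :: true :: v) - h (true :: ins 1 v)|
      + Pd n (k+2) 1 (fun w => h (true :: w))
  | n + 1, k + 1, d + 1, h => Pd (n+1) k d (fun w => h (false :: w))
      + Pd n (k+2) (d+2) (fun w => h (true :: w))
termination_by n k _ _ => (n, k)

lemma Pd_zero (k d : ℕ) (h : List Bool → ℝ) : Pd 0 k d h = 0 := by rw [Pd]
lemma Pd_succ_zero (n d : ℕ) (h : List Bool → ℝ) : Pd (n+1) 0 d h = 0 := by rw [Pd]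
lemma Pd_succ0 (n k : ℕ) (h : List Bool → ℝ) : Pd (n+1) (k+1) 0 h =
    ∑ v ∈ CS n k, |h (false :: true :: v) - h (true :: ins 1 v)|
      + Pd n (k+2) 1 (fun w => h (true :: w)) := by rw [Pd]
lemma Pd_succ1 (n k d : ℕ) (h : List Bool → ℝ) : Pd (n+1) (k+1) (d+1) h =
    Pd (n+1) k d (fun w => h (false :: w))
      + Pd n (k+2) (d+2) (fun w => h (true :: w)) := by rw [Pd]

/-- Auxiliary remainder. -/
def Yr : ℕ → ℕ → (List Bool → ℝ) → ℝ
  | 0, _, _ => 0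
  | _ + 1, 0, _ => 0
  | n + 1, k + 1, h => Pd n (k+2) 0 (fun w => h (true :: w)) + Yr (n+1) k (fun w => h (false :: w))
      + Yr n (k+2) (fun w => h (true :: w))
termination_by n k _ => (n, k)

lemma Yr_zero (k : ℕ) (h : List Bool → ℝ) : Yr 0 k h = 0 := by rw [Yr]
lemma Yr_succ_zero (n : ℕ) (h : List Bool → ℝ) : Yr (n+1) 0 h = 0 := by rw [Yr]
lemma Yr_succ (n k : ℕ) (h : List Bool → ℝ) : Yr (n+1) (k+1) h =
    Pd n (k+2) 0 (fun w => h (true :: w)) + Yr (n+1) k (fun w => h (false :: w))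
      + Yr n (k+2) (fun w => h (true :: w)) := by rw [Yr]

lemma ins_replicate (d m : ℕ) (h : d ≤ m) :
    ins d (List.replicate m false) = List.replicate (m+1) false := by
  induction d generalizing m with
  | zero => simp [ins, List.replicate_succ]
  | succ d ih =>
    rcases m with _ | m
    · omega
    · rw [List.replicate_succ, ins, ih m (by omega), ← List.replicate_succ]

lemma ins_le_Pd (n k : ℕ) : ∀ d h, d < k →
    ∑ v ∈ F n k, |h (ins d v) - h (ins (d+1) v)| ≤ Pd n (k+1) d h := by
  revert n k
  apply ind2
  · intro k d h hd
    rw [sum_F_zero, Pd_zero, ins_replicate _ _ hd.le, ins_replicate _ _ hd]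
    simp
  · intro n d h hd
    omega
  · intro n k h1 h2 _ d h hd
    rw [sum_F_succ]
    rcases d with _ | d
    · rw [Pd_succ0]
      have e1 : ∑ w ∈ F (n+1) k, |h (ins 0 (false :: w)) - h (ins (0+1) (false :: w))| = 0 := by
        apply Finset.sum_eq_zero; intro w _; simp [ins]
      rw [e1, zero_add]
      have e2 := h2 1 (fun w => h (true :: w)) (by omega)
      refine le_trans ?_ (add_le_add_right e2 _)
      simp only [CS]
      rw [← Finset.sum_add_distrib]
      apply Finset.sum_le_sum
      intro w _
      simp only [ins]
      exact abs_sub_le _ _ _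
    · rw [Pd_succ1]
      have e1 := h1 d (fun w => h (false :: w)) (by omega)
      have e2 := h2 (d+2) (fun w => h (true :: w)) (by omega)
      exact add_le_add e1 e2

lemma SW_le_aux (n k : ℕ) : ∀ h, SW n k h ≤ X1 n k h + Yr n k h := by
  revert n k
  apply ind2
  · intro k h; rw [SW_zero, X1_zero, Yr_zero]; simp
  · intro n h; rw [SW_succ_zero, X1_succ_zero, Yr_succ_zero]; simp
  · intro n k h1 h2 _ h
    rw [SW_succ, X1_succ, Yr_succ]
    have a := h1 (fun w => h (false :: w))
    have b := h2 (fun w => h (true :: w))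
    have c : ∑ v ∈ CS n k, |h (true :: ins 0 v) - h (true :: ins 1 v)|
        ≤ Pd n (k+2) 0 (fun w => h (true :: w)) := by
      rcases k with _ | k
      · simp only [CS, Finset.sum_empty]
        have := ins_le_Pd n 1 0 (fun w => h (true :: w)) (by omega)
        have h0 : 0 ≤ ∑ v ∈ F n 1, |h (true :: ins 0 v) - h (true :: ins (0+1) v)| :=
          Finset.sum_nonneg (fun _ _ => abs_nonneg _)
        exact le_trans h0 this
      · exact ins_le_Pd n (k+2) 0 (fun w => h (true :: w)) (by omega)
    have d : ∑ v ∈ CS n k, |h (false :: true :: v) - h (true :: false :: v)| ≤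
        ∑ v ∈ CS n k, |h (false :: true :: v) - h (true :: ins 1 v)|
        + ∑ v ∈ CS n k, |h (true :: ins 0 v) - h (true :: ins 1 v)| := by
      rw [← Finset.sum_add_distrib]
      refine Finset.sum_le_sum (fun w _ => ?_)
      rw [abs_sub_comm (h (true :: ins 0 w))]
      have e : ins 0 w = false :: w := by rw [ins]
      rw [e]
      exact abs_sub_le (h (false :: true :: w)) (h (true :: ins 1 w)) (h (true :: false :: w))
    linarith

lemma Yr_le_aux (n k : ℕ) : ∀ c h, Yr n k h + ∑ d ∈ range c, Pd n k d h ≤ X1 n k h := by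
  revert n k
  apply ind2
  · intro k c h; rw [X1_zero, Yr_zero]; simp [Pd_zero]
  · intro n c h; rw [X1_succ_zero, Yr_succ_zero]; simp [Pd_succ_zero]
  · intro n k h1 h2 _ c h
    rw [X1_succ, Yr_succ]
    rcases c with _ | c
    · have a := h1 0 (fun w => h (false :: w))
      have b := h2 1 (fun w => h (true :: w))
      have e : 0 ≤ ∑ v ∈ CS n k, |h (false :: true :: v) - h (true :: ins 1 v)| :=
        Finset.sum_nonneg (fun _ _ => abs_nonneg _)
      simp only [range_zero, Finset.sum_empty, range_one, Finset.sum_singleton] at *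
      linarith
    · have a := h1 c (fun w => h (false :: w))
      have b := h2 (c+2) (fun w => h (true :: w))
      rw [Finset.sum_range_succ'] at b ⊢
      rw [Finset.sum_range_succ'] at b
      simp only [Pd_succ0, Pd_succ1, Finset.sum_add_distrib]
      simp only [zero_add, add_assoc, Nat.reduceAdd] at *
      linarith

lemma SW_le (n k : ℕ) (h : List Bool → ℝ) : SW n k h ≤ 2 * X1 n k h := by
  have a := SW_le_aux n k h
  have b := Yr_le_aux n k 0 h
  simp at b
  linarith

/-! Degree bounds -/

lemma sum_ins_le (n k : ℕ) : ∀ (d : ℕ) (φ : List Bool → ℝ), (∀ w, 0 ≤ φ w) → d ≤ k →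
    ∑ v ∈ F n k, φ (ins d v) ≤ ∑ w ∈ F n (k+1), φ w := by
  revert n k
  apply ind2
  · intro k d φ hφ hd
    rw [sum_F_zero, sum_F_zero, ins_replicate _ _ hd]
  · intro n d φ hφ hd
    rw [F_succ_zero, Finset.sum_empty]
    exact Finset.sum_nonneg (fun _ _ => hφ _)
  · intro n k h1 h2 _ d φ hφ hd
    rcases d with _ | d
    · rw [sum_F_succ n (k+1)]
      simp only [ins]
      have : 0 ≤ ∑ w ∈ F n (k+1+2), φ (true :: w) := Finset.sum_nonneg (fun _ _ => hφ _)
      linarith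
    · rw [sum_F_succ, sum_F_succ]
      simp only [ins]
      have a := h1 d (fun w => φ (false :: w)) (fun _ => hφ _) (by omega)
      have b := h2 (d+2) (fun w => φ (true :: w)) (fun _ => hφ _) (by omega)
      exact add_le_add a b

lemma sum_F_nonneg (n k : ℕ) (φ : List Bool → ℝ) (hφ : ∀ w, 0 ≤ φ w) : 0 ≤ ∑ w ∈ F n k, φ w :=
  Finset.sum_nonneg (fun _ _ => hφ _)

lemma sum_FP_fst (n k : ℕ) : ∀ φ : List Bool → ℝ, (∀ w, 0 ≤ φ w) →
    ∑ p ∈ FP n k, φ p.1 ≤ n * ∑ w ∈ F n k, φ w := by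
  revert k
  induction n with
  | zero => intro k φ hφ; simp [FP_zero]
  | succ n ih =>
    have strong : ∀ k, ∀ φ : List Bool → ℝ, (∀ w, 0 ≤ φ w) →
        ∑ p ∈ FP (n+1) k, φ p.1 + ∑ v ∈ CS n k, φ (true :: v)
          ≤ ((n+1 : ℕ) : ℝ) * ∑ w ∈ F (n+1) k, φ w := by
      intro k
      induction k with
      | zero => intro φ hφ; simp [FP_succ_zero, F_succ_zero, CS]
      | succ k ihk =>
        intro φ hφ
        have a := ihk (fun w => φ (false :: w)) (fun _ => hφ _)
        have b := ih (k+2) (fun w => φ (true :: w)) (fun _ => hφ _)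
        rw [sum_F_succ, sum_FP_succ]
        simp only [cons2, headFlip]
        have e : CS n (k+1) = F n (k+2) := rfl
        rw [e]
        push_cast at *
        linarith
    intro k φ hφ
    have h0 : 0 ≤ ∑ v ∈ CS n k, φ (true :: v) := Finset.sum_nonneg (fun _ _ => hφ _)
    linarith [strong k φ hφ]

lemma sum_FP_snd (n k : ℕ) : ∀ φ : List Bool → ℝ, (∀ w, 0 ≤ φ w) →
    ∑ p ∈ FP n k, φ p.2 ≤ n * ∑ w ∈ F n k, φ w := by
  revert n k
  apply ind2
  · intro k φ hφ; simp [FP_zero]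
  · intro n φ hφ; simp [FP_succ_zero, F_succ_zero]
  · intro n k h1 h2 _ φ hφ
    rw [sum_F_succ, sum_FP_succ]
    simp only [cons2, headFlip]
    have a := h1 (fun w => φ (false :: w)) (fun _ => hφ _)
    have b := h2 (fun w => φ (true :: w)) (fun _ => hφ _)
    have c : ∑ v ∈ CS n k, φ (true :: ins 1 v) ≤ ∑ w ∈ F n (k+2), φ (true :: w) := by
      rcases k with _ | k
      · simp only [CS, Finset.sum_empty]; exact Finset.sum_nonneg (fun _ _ => hφ _)
      · exact sum_ins_le n (k+2) 1 (fun w => φ (true :: w)) (fun _ => hφ _) (by omega)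
    push_cast at *
    linarith

end FlipWalk


namespace FlipWalk

/-- Dirichlet form along flips. -/
noncomputable def X2 (n k : ℕ) (g : List Bool → ℝ) : ℝ := ∑ p ∈ FP n k, (g p.1 - g p.2) ^ 2

lemma X2_nonneg (n k : ℕ) (g : List Bool → ℝ) : 0 ≤ X2 n k g :=
  Finset.sum_nonneg (fun _ _ => sq_nonneg _)

lemma X2_succ_ge (n k : ℕ) (g : List Bool → ℝ) :
    X2 (n+1) k (fun w => g (false :: w)) + X2 n (k+2) (fun w => g (true :: w))
      ≤ X2 (n+1) (k+1) g := by
  simp only [X2, sum_FP_succ, cons2, headFlip]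
  have : 0 ≤ ∑ v ∈ CS n k, (g (false :: true :: v) - g (true :: ins 1 v)) ^ 2 :=
    Finset.sum_nonneg (fun _ _ => sq_nonneg _)
  linarith

lemma X1_sq_le (n k : ℕ) (g : List Bool → ℝ) :
    (X1 n k (fun w => g w ^ 2)) ^ 2 ≤ X2 n k g * (4 * n * ∑ w ∈ F n k, g w ^ 2) := by
  have h1 : X1 n k (fun w => g w ^ 2) = ∑ p ∈ FP n k, |g p.1 - g p.2| * |g p.1 + g p.2| := by
    unfold X1
    refine Finset.sum_congr rfl (fun p _ => ?_)
    rw [← abs_mul]; congr 1; ring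
  rw [h1]
  refine le_trans (Finset.sum_mul_sq_le_sq_mul_sq _ _ _) ?_
  simp only [sq_abs]
  change X2 n k g * _ ≤ _
  refine mul_le_mul_of_nonneg_left ?_ (X2_nonneg _ _ _)
  have a := sum_FP_fst n k (fun w => g w ^ 2) (fun _ => sq_nonneg _)
  have b := sum_FP_snd n k (fun w => g w ^ 2) (fun _ => sq_nonneg _)
  have c : ∑ p ∈ FP n k, (g p.1 + g p.2) ^ 2
      ≤ 2 * (∑ p ∈ FP n k, g p.1 ^ 2) + 2 * (∑ p ∈ FP n k, g p.2 ^ 2) := by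
    rw [Finset.mul_sum, Finset.mul_sum, ← Finset.sum_add_distrib]
    refine Finset.sum_le_sum (fun p _ => ?_)
    nlinarith [sq_nonneg (g p.1 - g p.2)]
  linarith

lemma mul_log_div_le {a p ρ : ℝ} (ha : 0 ≤ a) (hp : 0 < p) (hρ : 0 < ρ) :
    a * Real.log (a / p) ≤ a * Real.log ρ + a * (a / p / ρ - 1) := by
  rcases ha.eq_or_lt with rfl | ha
  · simp
  · have h := Real.log_le_sub_one_of_pos (x := a / p / ρ) (by positivity)
    rw [Real.log_div (by positivity) hρ.ne'] at h
    nlinarith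

lemma two_point {a b p q E : ℝ} (ha : 0 ≤ a) (hb : 0 ≤ b) (hp : 0 < p) (hq : 0 < q)
    (hE : 0 ≤ E) (h : (a / p - b / q) ^ 2 ≤ E * (a + b)) :
    a * Real.log (a / p) + b * Real.log (b / q) - (a + b) * Real.log ((a + b) / (p + q))
      ≤ p * q * E := by
  rcases (add_nonneg ha hb).eq_or_lt with h0 | hpos
  · obtain rfl : a = 0 := by linarith
    obtain rfl : b = 0 := by linarith
    simp; positivity
  · set ρ := (a + b) / (p + q) with hρ
    have hρ0 : 0 < ρ := by positivity
    have h1 := mul_log_div_le ha hp hρ0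
    have h2 := mul_log_div_le hb hq hρ0
    have h3 : a * (a / p / ρ - 1) + b * (b / q / ρ - 1) = p * q * ((a / p - b / q) ^ 2 / (a + b)) := by
      rw [hρ]; field_simp; ring
    have h4 : (a / p - b / q) ^ 2 / (a + b) ≤ E := by rwa [div_le_iff₀ hpos]
    have h5 : p * q * ((a / p - b / q) ^ 2 / (a + b)) ≤ p * q * E := by gcongr
    linarith

lemma two_point_state (n k : ℕ) (g : List Bool → ℝ) :
    (∑ w ∈ F (n+1) (k+1), g (false :: w) ^ 2) *
        Real.log ((∑ w ∈ F (n+1) (k+1), g (false :: w) ^ 2) / N (n+1) (k+1))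
      + (∑ w ∈ F n (k+3), g (true :: w) ^ 2) *
        Real.log ((∑ w ∈ F n (k+3), g (true :: w) ^ 2) / N n (k+3))
      - (∑ w ∈ F (n+1) (k+2), g w ^ 2) *
        Real.log ((∑ w ∈ F (n+1) (k+2), g w ^ 2) / N (n+1) (k+2))
      ≤ 64 * (2*n+k+4) * X2 (n+1) (k+2) g := by
  have hs := slice_avg n k (fun w => g w ^ 2)
  have hsw := SW_le (n+1) (k+2) (fun w => g w ^ 2)
  have hx := X1_sq_le (n+1) (k+2) g
  have hSW := SW_nonneg (n+1) (k+2) (fun w => g w ^ 2)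
  have p0 := N_pos (n+1) k
  have p1 := N_pos n (k+2)
  have p01 := N_pos n (k+1)
  have ra := N_ratio_a n (k+1)
  have rb := N_ratio_b n k
  have hX2 := X2_nonneg (n+1) (k+2) g
  rw [sum_F_succ n (k+1), N_succ n (k+1)]
  rw [sum_F_succ n (k+1)] at hx
  set S0 := ∑ w ∈ F (n+1) (k+1), g (false :: w) ^ 2 with hS0
  set S1 := ∑ w ∈ F n (k+1+2), g (true :: w) ^ 2 with hS1
  have q0 : 0 ≤ S0 := Finset.sum_nonneg (fun _ _ => sq_nonneg _)
  have q1 : 0 ≤ S1 := Finset.sum_nonneg (fun _ _ => sq_nonneg _)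
  set X := X2 (n+1) (k+2) g
  set M := N n (k+2)
  have key : (S0 / N (n+1) (k+1) - S1 / N n (k+3)) ^ 2 ≤ (16 * (n+1) * X / M ^ 2) * (S0 + S1) := by
    calc (S0 / N (n+1) (k+1) - S1 / N n (k+3)) ^ 2
        = |S0 / N (n+1) (k+1) - S1 / N n (k+3)| ^ 2 := (sq_abs _).symm
      _ ≤ (SW (n+1) (k+2) (fun w => g w ^ 2) / M) ^ 2 := by gcongr
      _ ≤ ((2 * X1 (n+1) (k+2) (fun w => g w ^ 2)) / M) ^ 2 := by gcongr
      _ = 4 * (X1 (n+1) (k+2) (fun w => g w ^ 2)) ^ 2 / M ^ 2 := by ring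
      _ ≤ 4 * (X * (4 * ((n+1 : ℕ):ℝ) * (S0 + S1))) / M ^ 2 := by gcongr
      _ = _ := by push_cast; ring
  have := two_point q0 q1 p0 p1 (E := 16 * (n+1) * X / M ^ 2) (by positivity) key
  refine le_trans this ?_
  have e : N (n+1) (k+1) * N n (k+2+1) * (16 * (n+1) * X / M ^ 2)
      = 16 * X * (((n+1) * N (n+1) (k+1)) * N n (k+3)) / M ^ 2 := by ring
  rw [e, div_le_iff₀ (by positivity)]
  have : ((n+1) * N (n+1) (k+1)) * N n (k+3) ≤ ((2*n+2+k) * M) * (4 * M) := by gcongr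
  calc 16 * X * (((n+1) * N (n+1) (k+1)) * N n (k+3)) ≤ 16 * X * (((2*n+2+k) * M) * (4 * M)) := by
        gcongr
    _ = 64 * (2*n+k+2) * X * M ^ 2 := by ring
    _ ≤ 64 * (2*n+k+4) * X * M ^ 2 := by gcongr; norm_num

/-- Log-Sobolev inequality for words. -/
lemma log_sobolev (n k : ℕ) : ∀ g : List Bool → ℝ,
    ∑ w ∈ F n k, g w ^ 2 * Real.log (g w ^ 2)
      - (∑ w ∈ F n k, g w ^ 2) * Real.log ((∑ w ∈ F n k, g w ^ 2) / N n k)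
      ≤ 64 * (2*n+k) ^ 2 * X2 n k g := by
  revert n k
  apply ind2
  · intro k g
    rw [sum_F_zero, sum_F_zero, N_zero, div_one, sub_self]
    have := X2_nonneg 0 k g
    positivity
  · intro n g
    have := X2_nonneg (n+1) 0 g
    simp only [F_succ_zero, Finset.sum_empty, zero_mul, sub_self]
    positivity
  · intro n k h1 h2 _ g
    have a := h1 (fun w => g (false :: w))
    have b := h2 (fun w => g (true :: w))
    have x := X2_succ_ge n k g
    have x0 := X2_nonneg (n+1) k (fun w => g (false :: w))
    have x1 := X2_nonneg n (k+2) (fun w => g (true :: w))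
    have x2 := X2_nonneg (n+1) (k+1) g
    have hL : (0:ℝ) ≤ 2*n+k := by positivity
    rcases k with _ | k
    · simp only [sum_F_succ, N_succ, N_succ_zero, F_succ_zero, Finset.sum_empty, zero_add] at *
      refine le_trans b ?_
      push_cast at *
      have : X2 n 2 (fun w => g (true :: w)) ≤ X2 (n+1) 1 g := by linarith
      have hc : 64 * (2*(n:ℝ)+2) ^ 2 ≤ 64 * (2*((n:ℝ)+1)+(0+1)) ^ 2 := by nlinarith
      simp only [zero_add] at hc ⊢
      exact mul_le_mul hc this x1 (by positivity)
    · have t := two_point_state n k g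
      rw [sum_F_succ n (k+1) (fun w => g w ^ 2 * Real.log (g w ^ 2))]
      push_cast at *
      have y : 64 * (2*((n:ℝ)+1)+(k+1)) ^ 2 * X2 (n+1) (k+1) (fun w => g (false :: w))
        + 64 * (2*(n:ℝ)+(k+1+2)) ^ 2 * X2 n (k+1+2) (fun w => g (true :: w))
        ≤ 64 * (2*(n:ℝ)+k+3) ^ 2 * X2 (n+1) (k+1+1) g := by
        have : (0:ℝ) ≤ 64 * (2*(n:ℝ)+k+3) ^ 2 := by positivity
        have := mul_le_mul_of_nonneg_left x this
        linarith
      have z : 64 * (2*(n:ℝ)+k+3) ^ 2 * X2 (n+1) (k+1+1) g + 64 * (2*n+k+4) * X2 (n+1) (k+2) g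
         ≤ 64 * (2*((n:ℝ)+1)+(k+1+1)) ^ 2 * X2 (n+1) (k+1+1) g := by
        have : (0:ℝ) ≤ ((64 * (2*((n:ℝ)+1)+(k+1+1)) ^ 2) - (64 * (2*(n:ℝ)+k+3) ^ 2 + 64 * (2*n+k+4))) * X2 (n+1) (k+1+1) g := by
          apply mul_nonneg _ x2
          push_cast at hL
          have hk : (0:ℝ) ≤ k := by positivity
          have hn : (0:ℝ) ≤ n := by positivity
          nlinarith
        have e : X2 (n+1) (k+2) g = X2 (n+1) (k+1+1) g := rfl
        rw [e]
        linarith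
      change _ - (∑ w ∈ F (n+1) (k+2), g w ^ 2) * Real.log ((∑ w ∈ F (n+1) (k+2), g w ^ 2) / N (n+1) (k+2)) ≤ _
      have e1 : k + 1 + 2 = k + 3 := rfl
      rw [e1] at *
      linarith

end FlipWalk


namespace FlipWalk

/-- `R` is a maximal non-crossing set of chords on the vertex set `Q` (sides included). -/
structure TriQ (Q : ℕ → Prop) (R : Finset (ℕ × ℕ)) : Prop where
  lt : ∀ a b, (a, b) ∈ R → a < b
  memL : ∀ a b, (a, b) ∈ R → Q a
  memR : ∀ a b, (a, b) ∈ R → Q b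
  nc : ∀ a b c d, (a, b) ∈ R → (c, d) ∈ R → a < c → c < b → b < d → False
  mx : ∀ a b, a < b → Q a → Q b →
    (∀ c d, (c, d) ∈ R → ¬ (a < c ∧ c < b ∧ b < d) ∧ ¬ (c < a ∧ a < d ∧ d < b)) → (a, b) ∈ R

lemma TriQ.congr {Q Q' : ℕ → Prop} {R : Finset (ℕ × ℕ)} (h : TriQ Q R) (e : ∀ q, Q q ↔ Q' q) :
    TriQ Q' R := by
  have : Q = Q' := funext (fun q => propext (e q))
  rwa [← this]

lemma TriQ.side {Q : ℕ → Prop} {R : Finset (ℕ × ℕ)} (h : TriQ Q R) {y z : ℕ} (hyz : y < z)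
    (hy : Q y) (hz : Q z) (hn : ∀ q, Q q → y < q → q < z → False) : (y, z) ∈ R := by
  refine h.mx y z hyz hy hz (fun c d hcd => ⟨?_, ?_⟩)
  · rintro ⟨h1, h2, _⟩; exact hn c (h.memL _ _ hcd) h1 h2
  · rintro ⟨_, h1, h2⟩; exact hn d (h.memR _ _ hcd) h1 h2

/-- Adding an ear. -/
lemma TriQ.ear {Q' Q : ℕ → Prop} {R : Finset (ℕ × ℕ)} (h : TriQ Q' R) {x y z : ℕ}
    (hQ : ∀ q, Q q ↔ q = x ∨ Q' q) (hyx : y < x) (hxz : x < z)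
    (hy : Q' y) (hz : Q' z) (hn : ∀ q, Q' q → y < q → q < z → False) :
    TriQ Q (insert (y, x) (insert (x, z) R)) := by
  have hs := h.side (hyx.trans hxz) hy hz hn
  refine ⟨?_, ?_, ?_, ?_, ?_⟩
  · intro a b hab
    simp only [Finset.mem_insert, Prod.mk.injEq] at hab
    rcases hab with ⟨rfl, rfl⟩ | ⟨rfl, rfl⟩ | hab
    · exact hyx
    · exact hxz
    · exact h.lt _ _ hab
  · intro a b hab
    simp only [Finset.mem_insert, Prod.mk.injEq] at hab
    rw [hQ]
    rcases hab with ⟨rfl, rfl⟩ | ⟨rfl, rfl⟩ | hab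
    · exact Or.inr hy
    · exact Or.inl rfl
    · exact Or.inr (h.memL _ _ hab)
  · intro a b hab
    simp only [Finset.mem_insert, Prod.mk.injEq] at hab
    rw [hQ]
    rcases hab with ⟨rfl, rfl⟩ | ⟨rfl, rfl⟩ | hab
    · exact Or.inl rfl
    · exact Or.inr hz
    · exact Or.inr (h.memR _ _ hab)
  · intro a b c d hab hcd h1 h2 h3
    simp only [Finset.mem_insert, Prod.mk.injEq] at hab hcd
    rcases hab with ⟨rfl, rfl⟩ | ⟨rfl, rfl⟩ | hab <;>
    rcases hcd with ⟨rfl, rfl⟩ | ⟨rfl, rfl⟩ | hcd <;> try omega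
    · exact hn c (h.memL _ _ hcd) h1 (by omega)
    · exact hn c (h.memL _ _ hcd) (by omega) h2
    · exact hn b (h.memR _ _ hab) h2 (by omega)
    · exact hn b (h.memR _ _ hab) (by omega) h3
    · exact h.nc _ _ _ _ hab hcd h1 h2 h3
  · intro a b hab ha hb hc
    have hsub : ∀ c d, (c, d) ∈ R → ¬ (a < c ∧ c < b ∧ b < d) ∧ ¬ (c < a ∧ a < d ∧ d < b) :=
      fun c d hcd => hc c d (by simp [hcd])
    have hs' := hsub y z hs
    simp only [Finset.mem_insert, Prod.mk.injEq]
    rw [hQ] at ha hb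
    rcases ha with rfl | ha
    · rcases hb with rfl | hb
      · omega
      · right; left
        refine ⟨rfl, ?_⟩
        by_contra hbz
        rcases lt_or_gt_of_ne hbz with hlt | hgt
        · exact hn b hb (by omega) hlt
        · omega
    · rcases hb with rfl | hb
      · left
        refine ⟨?_, rfl⟩
        by_contra hay
        rcases lt_or_gt_of_ne hay with hlt | hgt
        · omega
        · exact hn a ha hgt (by omega)
      · right; right
        exact h.mx a b hab ha hb hsub

/-- Removing an ear. -/
lemma TriQ.unear {Q' Q : ℕ → Prop} {R : Finset (ℕ × ℕ)} (h : TriQ Q R) {x y z : ℕ}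
    (hQ : ∀ q, Q' q ↔ q ≠ x ∧ Q q) (hyx : y < x) (hxz : x < z)
    (hn : ∀ q, Q' q → y < q → q < z → False) (hyz : (y, z) ∈ R) :
    TriQ Q' (R.filter (fun p => p.1 ≠ x ∧ p.2 ≠ x)) := by
  refine ⟨?_, ?_, ?_, ?_, ?_⟩
  · intro a b hab
    exact h.lt _ _ (Finset.mem_filter.mp hab).1
  · intro a b hab
    rw [Finset.mem_filter] at hab
    exact (hQ a).mpr ⟨hab.2.1, h.memL _ _ hab.1⟩
  · intro a b hab
    rw [Finset.mem_filter] at hab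
    exact (hQ b).mpr ⟨hab.2.2, h.memR _ _ hab.1⟩
  · intro a b c d hab hcd h1 h2 h3
    exact h.nc _ _ _ _ (Finset.mem_filter.mp hab).1 (Finset.mem_filter.mp hcd).1 h1 h2 h3
  · intro a b hab ha hb hc
    have ha' := (hQ a).mp ha
    have hb' := (hQ b).mp hb
    rw [Finset.mem_filter]
    refine ⟨?_, ha'.1, hb'.1⟩
    refine h.mx a b hab ha'.2 hb'.2 (fun c d hcd => ?_)
    by_cases hcx : c = x
    · subst hcx
      have hlt := h.lt _ _ hcd
      have hdz : d = z := by
        by_contra hne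
        rcases lt_or_gt_of_ne hne with hl | hg
        · exact hn d ((hQ d).mpr ⟨by omega, h.memR _ _ hcd⟩) (by omega) hl
        · exact h.nc _ _ _ _ hyz hcd hyx hxz hg
      subst hdz
      refine ⟨?_, ?_⟩
      · rintro ⟨h1, h2, h3⟩
        exact hn b hb (by omega) h3
      · rintro ⟨h1, h2, h3⟩
        exact hn a ha (by omega) h2
    · by_cases hdx : d = x
      · subst hdx
        have hlt := h.lt _ _ hcd
        have hcy : c = y := by
          by_contra hne
          rcases lt_or_gt_of_ne hne with hl | hg
          · exact h.nc _ _ _ _ hcd hyz hl hyx hxz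
          · exact hn c ((hQ c).mpr ⟨by omega, h.memL _ _ hcd⟩) hg (by omega)
        subst hcy
        refine ⟨?_, ?_⟩
        · rintro ⟨h1, h2, h3⟩
          exact hn b hb (by omega) (by omega)
        · rintro ⟨h1, h2, h3⟩
          exact hn a ha (by omega) (by omega)
      · exact hc c d (Finset.mem_filter.mpr ⟨hcd, hcx, hdx⟩)

/-- Stack decoding of a word into a set of chords. -/
def dec : List Bool → ℕ → List ℕ → Finset (ℕ × ℕ)
  | [], _, _ => ∅
  | true :: w, c, st => dec w (c+1) ((c+1) :: st)
  | false :: _, _, [] => ∅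
  | false :: _, c, [x] => {(x, c+1)}
  | false :: w, c, x :: y :: st => insert (y, x) (insert (x, c+1) (dec w c (y :: st)))

/-- The polygon attached to a state. -/
def Qst (n c : ℕ) (st : List ℕ) : ℕ → Prop := fun q => q ∈ st ∨ (c + 1 ≤ q ∧ q ≤ n + 1)

/-- Valid stacks. -/
def Val (c : ℕ) (st : List ℕ) : Prop := st.Pairwise (fun a b => b < a) ∧ ∀ q ∈ st, q ≤ c

lemma Val.push {c : ℕ} {st : List ℕ} (h : Val c st) : Val (c+1) ((c+1) :: st) := by
  refine ⟨List.pairwise_cons.mpr ⟨fun q hq => by have := h.2 q hq; omega, h.1⟩, ?_⟩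
  intro q hq
  rcases List.mem_cons.mp hq with rfl | hq
  · exact le_rfl
  · have := h.2 q hq; omega

lemma Val.pop {c x : ℕ} {st : List ℕ} (h : Val c (x :: st)) : Val c st :=
  ⟨(List.pairwise_cons.mp h.1).2, fun q hq => h.2 q (List.mem_cons_of_mem _ hq)⟩

lemma Val.lt {c x y : ℕ} {st : List ℕ} (h : Val c (x :: st)) (hy : y ∈ st) : y < x :=
  (List.pairwise_cons.mp h.1).1 y hy

lemma Val.le {c x : ℕ} {st : List ℕ} (h : Val c (x :: st)) : x ≤ c := h.2 x (by simp)

lemma F_cases {m k : ℕ} {w : List Bool} (h : w ∈ F m (k+1)) :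
    (∃ w', w = false :: w' ∧ w' ∈ F m k) ∨
    (∃ m' w', m = m' + 1 ∧ w = true :: w' ∧ w' ∈ F m' (k+2)) := by
  rcases m with _ | m
  · rw [F_zero, Finset.mem_singleton] at h
    left
    exact ⟨List.replicate k false, by rw [h, List.replicate_succ], by rw [F_zero]; simp⟩
  · rw [F_succ_succ, Finset.mem_union, Finset.mem_image, Finset.mem_image] at h
    rcases h with ⟨w', h1, h2⟩ | ⟨w', h1, h2⟩
    · exact Or.inl ⟨w', h2.symm, h1⟩
    · exact Or.inr ⟨m, w', rfl, h2.symm, h1⟩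

lemma F_zero_right {m : ℕ} {w : List Bool} (h : w ∈ F m 0) : m = 0 ∧ w = [] := by
  rcases m with _ | m
  · rw [F_zero] at h; simpa using h
  · rw [F_succ_zero] at h; simp at h

lemma F_mem_false {m k : ℕ} {w : List Bool} (h : w ∈ F m k) : (false :: w) ∈ F m (k+1) := by
  rcases m with _ | m
  · rw [F_zero, Finset.mem_singleton] at h ⊢
    rw [h, List.replicate_succ]
  · rw [F_succ_succ]; simp [h]

lemma F_mem_true {m k : ℕ} {w : List Bool} (h : w ∈ F m (k+2)) : (true :: w) ∈ F (m+1) (k+1) := by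
  rw [F_succ_succ]; simp [h]

lemma Qst_push {n c : ℕ} {st : List ℕ} (h : c < n) (q : ℕ) :
    Qst n (c+1) ((c+1) :: st) q ↔ Qst n c st q := by
  unfold Qst
  rw [List.mem_cons]
  constructor
  · rintro ((rfl | h1) | h1)
    · right; omega
    · exact Or.inl h1
    · right; omega
  · rintro (h1 | h1)
    · exact Or.inl (Or.inr h1)
    · by_cases h2 : q = c + 1
      · exact Or.inl (Or.inl h2)
      · right; omega

lemma Val.gap {n c x y : ℕ} {st : List ℕ} (h : Val c (y :: st)) :
    ∀ q, Qst n c (y :: st) q → y < q → q < c + 1 → False := by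
  rintro q (h1 | h1) h2 h3
  · rcases List.mem_cons.mp h1 with rfl | h1
    · omega
    · have := h.lt h1; omega
  · omega

lemma dec_tri (n : ℕ) (w : List Bool) : ∀ m k c st, w ∈ F m (k+1) → st.length = k + 1 → Val c st →
    c + m = n → TriQ (Qst n c st) (dec w c st) := by
  induction w with
  | nil =>
    intro m k c st hw
    rcases F_cases hw with ⟨w', h, _⟩ | ⟨m', w', _, h, _⟩ <;> simp at h
  | cons b w ih =>
    intro m k c st hw hl hv hn
    rcases F_cases hw with ⟨w', h, hw'⟩ | ⟨m', w', hm, h, hw'⟩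
    · simp only [List.cons.injEq] at h
      obtain ⟨rfl, rfl⟩ := h
      match st, hl, hv with
      | [x], hl, hv =>
        obtain rfl : k = 0 := by simpa using hl.symm
        obtain ⟨rfl, rfl⟩ := F_zero_right hw'
        have hx := hv.le
        obtain rfl : c = n := by omega
        rw [dec]
        have hQ : ∀ q, Qst c c [x] q ↔ q = x ∨ q = c + 1 := by
          intro q; unfold Qst; rw [List.mem_singleton]
          constructor
          · rintro (h | h)
            · exact Or.inl h
            · right; omega
          · rintro (h | h)
            · exact Or.inl h
            · right; omega
        refine ⟨?_, ?_, ?_, ?_, ?_⟩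
        · intro a b hab; simp at hab; omega
        · intro a b hab; simp at hab; rw [hQ]; omega
        · intro a b hab; simp at hab; rw [hQ]; omega
        · intro a b c' d hab hcd; simp at hab hcd; omega
        · intro a b hab ha hb _; rw [hQ] at ha hb; simp; omega
      | x :: y :: st, hl, hv =>
        rcases k with _ | k
        · simp at hl
        rw [dec]
        have hx := hv.le
        have hyx : y < x := hv.lt (by simp)
        refine TriQ.ear (ih m k c (y :: st) hw' (by simpa using hl) hv.pop hn) ?_ hyx (by omega)
          (Or.inl (by simp)) (Or.inr (by omega)) (hv.pop.gap (x := x))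
        intro q
        unfold Qst
        rw [List.mem_cons (a := q) (b := x), or_assoc]
    · simp only [List.cons.injEq] at h
      obtain ⟨rfl, rfl⟩ := h
      rw [dec]
      refine TriQ.congr (ih m' (k+1) (c+1) ((c+1) :: st) hw' (by simp [hl]) hv.push (by omega)) ?_
      exact Qst_push (by omega)

lemma dec_visible (n : ℕ) (w : List Bool) : ∀ m k c st, w ∈ F m (k+1) → st.length = k + 1 →
    Val c st → c + m = n → ∀ a b z, (a, b) ∈ dec w c st → b ≤ c → z ∈ st → a < z → z < b → False := by
  induction w with
  | nil =>
    intro m k c st hw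
    rcases F_cases hw with ⟨w', h, _⟩ | ⟨m', w', _, h, _⟩ <;> simp at h
  | cons b w ih =>
    intro m k c st hw hl hv hn a' b' z hab hb hz h1 h2
    rcases F_cases hw with ⟨w', h, hw'⟩ | ⟨m', w', hm, h, hw'⟩
    · simp only [List.cons.injEq] at h
      obtain ⟨rfl, rfl⟩ := h
      match st, hl, hv with
      | [x], hl, hv =>
        simp [dec] at hab
        omega
      | x :: y :: st, hl, hv =>
        rcases k with _ | k
        · simp at hl
        rw [dec] at hab
        simp only [Finset.mem_insert, Prod.mk.injEq] at hab
        have hyx : y < x := hv.lt (by simp)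
        rcases hab with ⟨rfl, rfl⟩ | ⟨rfl, rfl⟩ | hab
        · rcases List.mem_cons.mp hz with rfl | hz
          · omega
          · rcases List.mem_cons.mp hz with rfl | hz
            · omega
            · have := hv.pop.lt hz; omega
        · omega
        · have T := dec_tri n w m k c (y :: st) hw' (by simpa using hl) hv.pop hn
          rcases List.mem_cons.mp hz with rfl | hz
          · exact hv.pop.gap (n := n) (x := z) b' (T.memR _ _ hab) (by omega) (by omega)
          · exact ih m k c (y :: st) hw' (by simpa using hl) hv.pop hn a' b' z hab hb hz h1 h2
    · simp only [List.cons.injEq] at h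
      obtain ⟨rfl, rfl⟩ := h
      rw [dec] at hab
      exact ih m' (k+1) (c+1) ((c+1) :: st) hw' (by simp [hl]) hv.push (by omega) a' b' z hab
        (by omega) (List.mem_cons_of_mem _ hz) h1 h2

end FlipWalk


namespace FlipWalk

lemma dec_not_mem {n c m k x y : ℕ} {st : List ℕ} {w : List Bool} (hw : w ∈ F m (k+1))
    (hl : (y :: st).length = k + 1) (hv : Val c (x :: y :: st)) (hn : c + m = n) :
    ∀ a b, (a, b) ∈ dec w c (y :: st) → a ≠ x ∧ b ≠ x := by
  intro a b hab
  have T := dec_tri n w m k c (y :: st) hw hl hv.pop hn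
  have hx := hv.le
  have hyx : y < x := hv.lt (by simp)
  constructor
  · rintro rfl
    exact hv.pop.gap (n := n) (x := a) a (T.memL _ _ hab) hyx (by omega)
  · rintro rfl
    exact hv.pop.gap (n := n) (x := b) b (T.memR _ _ hab) hyx (by omega)

lemma dec_card (w : List Bool) : ∀ m k c st, w ∈ F m (k+1) → st.length = k + 1 → Val c st →
    (dec w c st).card = 2 * (m + k) + 1 := by
  induction w with
  | nil =>
    intro m k c st hw
    rcases F_cases hw with ⟨w', h, _⟩ | ⟨m', w', _, h, _⟩ <;> simp at h
  | cons b w ih =>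
    intro m k c st hw hl hv
    rcases F_cases hw with ⟨w', h, hw'⟩ | ⟨m', w', hm, h, hw'⟩
    · simp only [List.cons.injEq] at h
      obtain ⟨rfl, rfl⟩ := h
      match st, hl, hv with
      | [x], hl, hv =>
        obtain rfl : k = 0 := by simpa using hl.symm
        obtain ⟨rfl, rfl⟩ := F_zero_right hw'
        simp [dec]
      | x :: y :: st, hl, hv =>
        rcases k with _ | k
        · simp at hl
        have hyx : y < x := hv.lt (by simp)
        have hnm := dec_not_mem hw' (by simpa using hl) hv rfl
        rw [dec, Finset.card_insert_of_notMem, Finset.card_insert_of_notMem,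
          ih m k c (y :: st) hw' (by simpa using hl) hv.pop]
        · omega
        · intro h; exact (hnm _ _ h).1 rfl
        · rw [Finset.mem_insert]
          rintro (h | h)
          · simp only [Prod.mk.injEq] at h; omega
          · exact (hnm _ _ h).2 rfl
    · simp only [List.cons.injEq] at h
      obtain ⟨rfl, rfl⟩ := h
      rw [dec, ih m' (k+1) (c+1) ((c+1) :: st) hw' (by simp [hl]) hv.push]
      omega

lemma dec_inj (w : List Bool) : ∀ m k c st, w ∈ F m (k+1) → st.length = k + 1 → Val c st →
    ∀ v ∈ F m (k+1), dec w c st = dec v c st → w = v := by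
  induction w with
  | nil =>
    intro m k c st hw
    rcases F_cases hw with ⟨w', h, _⟩ | ⟨m', w', _, h, _⟩ <;> simp at h
  | cons b w ih =>
    have bad : ∀ m k c x y st w v, w ∈ F (m+1) (k+1) → v ∈ F m (k+1+2) →
        st.length = k → Val c (x :: y :: st) →
        dec (false :: w) c (x :: y :: st) = dec (true :: v) c (x :: y :: st) → False := by
      intro m k c x y st w v hw hv hl hval he
      rw [dec, dec] at he
      have hx := hval.le
      have hyx : y < x := hval.lt (by simp)
      have T := dec_tri (c+(m+1)) w (m+1) k c (y :: st) hw (by simp [hl]) hval.pop rfl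
      have hs := T.side (y := y) (z := c+1) (by omega) (Or.inl (by simp)) (Or.inr (by omega))
        (hval.pop.gap (x := x))
      have hm : (y, c+1) ∈ dec v (c+1) ((c+1) :: x :: y :: st) := by rw [← he]; simp [hs]
      exact dec_visible (c+1+m) v m (k+2) (c+1) _ hv (by simp [hl]) hval.push rfl y (c+1) x hm
        le_rfl (by simp) hyx (by omega)
    intro m k c st hw hl hv v hvF he
    rcases F_cases hw with ⟨w', h, hw'⟩ | ⟨m', w', hm, h, hw'⟩
    · simp only [List.cons.injEq] at h
      obtain ⟨rfl, rfl⟩ := h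
      rcases F_cases hvF with ⟨v', rfl, hv'⟩ | ⟨m', v', hm, rfl, hv'⟩
      · match st, hl, hv with
        | [x], hl, hv =>
          obtain rfl : k = 0 := by simpa using hl.symm
          obtain ⟨rfl, rfl⟩ := F_zero_right hw'
          obtain ⟨_, rfl⟩ := F_zero_right hv'
          rfl
        | x :: y :: st, hl, hv =>
          rcases k with _ | k
          · simp at hl
          congr 1
          have h1 := dec_not_mem hw' (by simpa using hl) hv rfl
          have h2 := dec_not_mem hv' (by simpa using hl) hv rfl
          refine ih m k c (y :: st) hw' (by simpa using hl) hv.pop v' hv' ?_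
          rw [dec, dec] at he
          ext ⟨a, b⟩
          have e := Finset.ext_iff.mp he (a, b)
          simp only [Finset.mem_insert, Prod.mk.injEq] at e
          constructor
          · intro hm
            have := h1 _ _ hm
            have := e.mp (Or.inr (Or.inr hm))
            tauto
          · intro hm
            have := h2 _ _ hm
            have := e.mpr (Or.inr (Or.inr hm))
            tauto
      · subst hm
        match st, hl, hv with
        | [x], hl, hv =>
          obtain rfl : k = 0 := by simpa using hl.symm
          obtain ⟨h0, rfl⟩ := F_zero_right hw'
          omega
        | x :: y :: st, hl, hv =>
          rcases k with _ | k
          · simp at hl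
          exact (bad m' k c x y st w v' hw' hv' (by simpa using hl) hv he).elim
    · simp only [List.cons.injEq] at h
      obtain ⟨rfl, rfl⟩ := h
      subst hm
      rcases F_cases hvF with ⟨v', rfl, hv'⟩ | ⟨m'', v', hm, rfl, hv'⟩
      · match st, hl, hv with
        | [x], hl, hv =>
          obtain rfl : k = 0 := by simpa using hl.symm
          obtain ⟨h0, rfl⟩ := F_zero_right hv'
          omega
        | x :: y :: st, hl, hv =>
          rcases k with _ | k
          · simp at hl
          exact (bad m' k c x y st v' w hv' hw' (by simpa using hl) hv he.symm).elim
      · obtain rfl : m'' = m' := by omega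
        congr 1
        rw [dec, dec] at he
        exact ih m'' (k+1) (c+1) ((c+1) :: st) hw' (by simp [hl]) hv.push v' hv' he

lemma TriQ.unear_eq {Q : ℕ → Prop} {R : Finset (ℕ × ℕ)} (h : TriQ Q R) {x y z : ℕ}
    (hyx : y < x) (hxz : x < z) (hx : Q x) (hy : Q y) (hz : Q z)
    (hn : ∀ q, q ≠ x → Q q → y < q → q < z → False) (hyz : (y, z) ∈ R) :
    insert (y, x) (insert (x, z) (R.filter (fun p => p.1 ≠ x ∧ p.2 ≠ x))) = R := by
  have s1 : (y, x) ∈ R := h.side hyx hy hx (fun q hq h1 h2 => hn q (by omega) hq h1 (by omega))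
  have s2 : (x, z) ∈ R := h.side hxz hx hz (fun q hq h1 h2 => hn q (by omega) hq (by omega) h2)
  ext ⟨a, b⟩
  simp only [Finset.mem_insert, Finset.mem_filter, Prod.mk.injEq]
  constructor
  · rintro (⟨rfl, rfl⟩ | ⟨rfl, rfl⟩ | hab)
    · exact s1
    · exact s2
    · exact hab.1
  · intro hab
    have hlt := h.lt _ _ hab
    by_cases hax : a = x
    · subst hax
      right; left
      refine ⟨rfl, ?_⟩
      by_contra hne
      rcases lt_or_gt_of_ne hne with hl | hg
      · exact hn b (by omega) (h.memR _ _ hab) (by omega) hl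
      · exact h.nc _ _ _ _ hyz hab hyx hxz hg
    · by_cases hbx : b = x
      · subst hbx
        left
        refine ⟨?_, rfl⟩
        by_contra hne
        rcases lt_or_gt_of_ne hne with hl | hg
        · exact h.nc _ _ _ _ hab hyz hl hyx hxz
        · exact hn a hax (h.memL _ _ hab) hg (by omega)
      · exact Or.inr (Or.inr ⟨hab, hax, hbx⟩)

/-- Every maximal non-crossing set compatible with a stack is decoded from a word. -/
lemma enc (n s : ℕ) : ∀ m k c st R, 2 * m + k = s → st.length = k + 1 → Val c st → c + m = n →
    TriQ (Qst n c st) R →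
    (∀ a b z, (a, b) ∈ R → b ≤ c → z ∈ st → a < z → z < b → False) →
    ∃ w ∈ F m (k+1), dec w c st = R := by
  induction s with
  | zero =>
    intro m k c st R hs hl hv hn T hI
    obtain rfl : m = 0 := by omega
    obtain rfl : k = 0 := by omega
    match st, hl, hv with
    | [x], hl, hv =>
      have hx := hv.le
      obtain rfl : c = n := by omega
      refine ⟨[false], by rw [F_zero]; simp, ?_⟩
      rw [dec]
      ext ⟨a, b⟩
      simp only [Finset.mem_singleton, Prod.mk.injEq]
      constructor
      · rintro ⟨rfl, rfl⟩
        exact T.side (by omega) (Or.inl (by simp)) (Or.inr (by omega)) (hv.gap (x := 0))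
      · intro hab
        have h1 := T.memL _ _ hab
        have h2 := T.memR _ _ hab
        have h3 := T.lt _ _ hab
        unfold Qst at h1 h2
        rw [List.mem_singleton] at h1 h2
        omega
  | succ s ih =>
    intro m k c st R hs hl hv hn T hI
    -- the push step
    have push : ∀ m', m = m' + 1 →
        (∀ a z, (a, c+1) ∈ R → z ∈ st → a < z → z < c + 1 → False) →
        ∃ w ∈ F m (k+1), dec w c st = R := by
      rintro m' rfl hI2
      obtain ⟨w, hw, he⟩ := ih m' (k+1) (c+1) ((c+1) :: st) R (by omega) (by simp [hl]) hv.push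
        (by omega) (T.congr (fun q => (Qst_push (by omega) q).symm)) (by
          intro a b z hab hb hz h1 h2
          rcases List.mem_cons.mp hz with rfl | hz
          · omega
          · by_cases hbc : b = c + 1
            · subst hbc; exact hI2 a z hab hz h1 h2
            · exact hI a b z hab (by omega) hz h1 h2)
      exact ⟨true :: w, F_mem_true hw, by rw [dec]; exact he⟩
    match st, hl, hv with
    | [x], hl, hv =>
      obtain rfl : k = 0 := by simpa using hl.symm
      have hx := hv.le
      refine push (m-1) (by omega) ?_
      intro a z hab hz h1 h2
      rw [List.mem_singleton] at hz
      have h3 := T.memL _ _ hab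
      unfold Qst at h3
      rw [List.mem_singleton] at h3
      omega
    | x :: y :: st, hl, hv =>
      rcases k with _ | k
      · simp at hl
      have hx := hv.le
      have hyx : y < x := hv.lt (by simp)
      have hQ' : ∀ q, Qst n c (y :: st) q ↔ q ≠ x ∧ Qst n c (x :: y :: st) q := by
        intro q
        unfold Qst
        rw [List.mem_cons (a := q) (b := x)]
        constructor
        · rintro (h | h)
          · exact ⟨by have := hv.lt h; omega, Or.inl (Or.inr h)⟩
          · exact ⟨by omega, Or.inr h⟩
        · rintro ⟨h0, (h | h) | h⟩
          · exact absurd h h0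
          · exact Or.inl h
          · exact Or.inr h
      have hQx : Qst n c (x :: y :: st) x := Or.inl (by simp)
      have hQy : Qst n c (x :: y :: st) y := Or.inl (by simp)
      have hQz : Qst n c (x :: y :: st) (c+1) := Or.inr (by omega)
      have hcross : ∀ u v, (u, v) ∈ R → ¬ (u < y ∧ y < v ∧ v < c + 1) := by
        rintro u v huv ⟨h1, h2, h3⟩
        exact hI u v y huv (by omega) (by simp) h1 h2
      by_cases hyz : (y, c+1) ∈ R
      · obtain ⟨w, hw, he⟩ := ih m k c (y :: st) (R.filter (fun p => p.1 ≠ x ∧ p.2 ≠ x)) (by omega)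
          (by simpa using hl) hv.pop hn
          (T.unear hQ' hyx (by omega) (hv.pop.gap (x := x)) hyz) (by
            intro a b z hab hb hz h1 h2
            exact hI a b z (Finset.mem_filter.mp hab).1 hb (List.mem_cons_of_mem _ hz) h1 h2)
        refine ⟨false :: w, F_mem_false hw, ?_⟩
        rw [dec, he]
        exact T.unear_eq hyx (by omega) hQx hQy hQz
          (fun q h0 hq h1 h2 => hv.pop.gap (x := x) q ((hQ' q).mpr ⟨h0, hq⟩) h1 h2) hyz
      · rcases m with _ | m
        · exfalso
          apply hyz
          refine T.mx y (c+1) (by omega) hQy hQz (fun u v huv => ⟨?_, hcross u v huv⟩)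
          rintro ⟨h1, h2, h3⟩
          rcases T.memR _ _ huv with h4 | h4
          · have := hv.2 v h4; omega
          · omega
        · refine push m rfl ?_
          intro a z hab hz h1 h2
          have hzx : z ≤ x := by
            rcases List.mem_cons.mp hz with rfl | hz
            · exact le_rfl
            · exact (hv.lt hz).le
          have hay : a < y := by
            rcases T.memL _ _ hab with h3 | h3
            · rcases List.mem_cons.mp h3 with rfl | h3
              · omega
              · rcases List.mem_cons.mp h3 with rfl | h3
                · exact absurd hab hyz
                · exact hv.pop.lt h3
            · omega
          apply hyz
          refine T.mx y (c+1) (by omega) hQy hQz (fun u v huv => ⟨?_, hcross u v huv⟩)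
          rintro ⟨h4, h5, h6⟩
          exact T.nc _ _ _ _ hab huv (by omega) h5 h6

lemma ins_mem (v : List Bool) : ∀ m k d, v ∈ F m k → d ≤ k → ins d v ∈ F m (k+1) := by
  induction v with
  | nil =>
    intro m k d hv hd
    rcases d with _ | d
    · rw [ins]; exact F_mem_false hv
    · rcases k with _ | k
      · omega
      · rcases F_cases hv with ⟨w', h, _⟩ | ⟨m', w', _, h, _⟩ <;> simp at h
  | cons b v ih =>
    intro m k d hv hd
    rcases d with _ | d
    · rw [ins]; exact F_mem_false hv
    · rcases k with _ | k
      · omega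
      · rcases F_cases hv with ⟨w', h, hw⟩ | ⟨m', w', hm, h, hw⟩
        · simp only [List.cons.injEq] at h
          obtain ⟨rfl, rfl⟩ := h
          rw [ins]
          exact F_mem_false (ih m k d hw (by omega))
        · simp only [List.cons.injEq] at h
          obtain ⟨rfl, rfl⟩ := h
          subst hm
          rw [ins]
          exact F_mem_true (ih m' (k+2) (d+2) hw (by omega))

lemma ins_dec (v : List Bool) : ∀ m k c top a x y st, v ∈ F m (k+1) →
    (top ++ a :: y :: st).length = k + 1 →
    ∃ X e, c ≤ e ∧ dec v c (top ++ a :: y :: st) = insert (y, a) X ∧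
      dec (ins (top.length + 1) v) c (top ++ a :: x :: y :: st)
        = insert (x, a) (insert (y, x) (insert (x, e+1) X)) := by
  induction v with
  | nil =>
    intro m k c top a x y st hw
    rcases F_cases hw with ⟨w', h, _⟩ | ⟨m', w', _, h, _⟩ <;> simp at h
  | cons b v ih =>
    intro m k c top a x y st hw hl
    rcases F_cases hw with ⟨w', h, hw'⟩ | ⟨m', w', hm, h, hw'⟩
    · simp only [List.cons.injEq] at h
      obtain ⟨rfl, rfl⟩ := h
      match top, hl with
      | [], hl =>
        refine ⟨insert (a, c+1) (dec v c (y :: st)), c, le_rfl, ?_, ?_⟩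
        · simp only [List.nil_append]; rw [dec]
        · simp only [List.nil_append, List.length_nil, zero_add]
          rw [ins, ins, dec, dec]
          ext p; simp only [Finset.mem_insert]; tauto
      | [t], hl =>
        rcases k with _ | k
        · simp at hl
        obtain ⟨X, e, h1, h2, h3⟩ := ih m k c [] a x y st hw' (by simpa using hl)
        simp only [List.nil_append, List.length_nil, zero_add] at h2 h3
        refine ⟨insert (a, t) (insert (t, c+1) X), e, h1, ?_, ?_⟩
        · simp only [List.cons_append, List.nil_append]
          rw [dec, h2]
          ext p; simp only [Finset.mem_insert]; tauto
        · simp only [List.cons_append, List.nil_append, List.length_cons, List.length_nil, zero_add]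
          rw [ins, dec, h3]
          ext p; simp only [Finset.mem_insert]; tauto
      | t :: u :: top, hl =>
        rcases k with _ | k
        · simp at hl
        obtain ⟨X, e, h1, h2, h3⟩ := ih m k c (u :: top) a x y st hw' (by simpa using hl)
        simp only [List.cons_append, List.length_cons] at h2 h3
        refine ⟨insert (u, t) (insert (t, c+1) X), e, h1, ?_, ?_⟩
        · simp only [List.cons_append]
          rw [dec, h2]
          ext p; simp only [Finset.mem_insert]; tauto
        · simp only [List.cons_append, List.length_cons]
          rw [ins, dec, h3]
          ext p; simp only [Finset.mem_insert]; tauto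
    · simp only [List.cons.injEq] at h
      obtain ⟨rfl, rfl⟩ := h
      obtain ⟨X, e, h1, h2, h3⟩ := ih m' (k+1) (c+1) ((c+1) :: top) a x y st hw' (by simpa using hl)
      refine ⟨X, e, by omega, ?_, ?_⟩
      · rw [dec]; exact h2
      · rw [ins, dec]; exact h3

/-- The flip pairs of words decode to chord sets differing by a flip. -/
lemma FP_dec (m k : ℕ) : ∀ c st p, p ∈ FP m k → st.length = k → Val c st →
    p.1 ∈ F m k ∧ p.2 ∈ F m k ∧ ∃ X i j l r, i < j ∧ j < l ∧ l < r ∧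
      dec p.1 c st = insert (i, l) X ∧ dec p.2 c st = insert (j, r) X := by
  revert m k
  apply ind2
  · intro k c st p hp; rw [FP_zero] at hp; simp at hp
  · intro n c st p hp; rw [FP_succ_zero] at hp; simp at hp
  · intro m k h1 h2 _ c st p hp hl hv
    rw [FP_succ_succ] at hp
    simp only [Finset.mem_union, Finset.mem_image] at hp
    rcases hp with ⟨q, hq, rfl⟩ | ⟨q, hq, rfl⟩ | ⟨v, hvv, rfl⟩
    · rcases k with _ | k
      · rw [FP_succ_zero] at hq; simp at hq
      match st, hl, hv with
      | [x], hl, hv => simp at hl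
      | x :: y :: st, hl, hv =>
        obtain ⟨f1, f2, X, i, j, l, r, hij, hjl, hlr, e1, e2⟩ :=
          h1 c (y :: st) q hq (by simpa using hl) hv.pop
        refine ⟨F_mem_false f1, F_mem_false f2, insert (y, x) (insert (x, c+1) X), i, j, l, r,
          hij, hjl, hlr, ?_, ?_⟩
        · simp only [cons2]; rw [dec, e1]
          ext p; simp only [Finset.mem_insert]; tauto
        · simp only [cons2]; rw [dec, e2]
          ext p; simp only [Finset.mem_insert]; tauto
    · obtain ⟨f1, f2, X, i, j, l, r, hij, hjl, hlr, e1, e2⟩ :=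
          h2 (c+1) ((c+1) :: st) q hq (by simp [hl]) hv.push
      refine ⟨F_mem_true f1, F_mem_true f2, X, i, j, l, r, hij, hjl, hlr, ?_, ?_⟩
      · simp only [cons2]; rw [dec, e1]
      · simp only [cons2]; rw [dec, e2]
    · rcases k with _ | k
      · simp [CS] at hvv
      have hvF : v ∈ F m (k+2) := hvv
      match st, hl, hv with
      | [x], hl, hv => simp at hl
      | x :: y :: st, hl, hv =>
        have hx := hv.le
        have hyx : y < x := hv.lt (by simp)
        obtain ⟨X, e, h3, h4, h5⟩ := ins_dec v m (k+1) (c+1) [] (c+1) x y st hvF (by simpa using hl)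
        simp only [List.nil_append, List.length_nil, zero_add] at h4 h5
        refine ⟨F_mem_false (F_mem_true hvF), F_mem_true (ins_mem v m (k+2) 1 hvF (by omega)),
          insert (y, x) (insert (x, c+1) X), y, x, c+1, e+1, hyx, by omega, by omega, ?_, ?_⟩
        · simp only [headFlip]; rw [dec, dec, h4]
          ext p; simp only [Finset.mem_insert]; tauto
        · simp only [headFlip]; rw [dec, h5]
          ext p; simp only [Finset.mem_insert]; tauto

end FlipWalk


namespace FlipWalk

lemma phi_tangent {a b : ℝ} (ha : 0 < a) (hb : 0 ≤ b) :
    a * Real.log a + (1 + Real.log a) * (b - a) + (√b - √a) ^ 2 ≤ b * Real.log b := by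
  have sa : 0 < √a := Real.sqrt_pos.mpr ha
  have ea : √a ^ 2 = a := Real.sq_sqrt ha.le
  have eb : √b ^ 2 = b := Real.sq_sqrt hb
  rcases hb.eq_or_lt with rfl | hb
  · simp only [Real.sqrt_zero, zero_mul]; nlinarith
  · have sb : 0 < √b := Real.sqrt_pos.mpr hb
    have h := Real.log_le_sub_one_of_pos (x := √a / √b) (by positivity)
    rw [Real.log_div sa.ne' sb.ne', Real.log_sqrt ha.le, Real.log_sqrt hb.le] at h
    have h2 : b * (√a / √b) = √a * √b := by
      rw [mul_div_assoc', div_eq_iff sb.ne']; linear_combination (-√a) * eb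
    have h3 : b * (Real.log a / 2 - Real.log b / 2) ≤ b * (√a / √b - 1) := by gcongr
    rw [mul_sub b (√a / √b), h2] at h3
    nlinarith

lemma phi_jensen {V : Type*} [Fintype V] (p f : V → ℝ) (hp : ∀ y, 0 ≤ p y) (hs : ∑ y, p y = 1)
    (hf : ∀ y, 0 ≤ f y) (a : ℝ) (ha : a = ∑ y, p y * f y) :
    a * Real.log a + ∑ y, p y * (√(f y) - √a) ^ 2 ≤ ∑ y, p y * (f y * Real.log (f y)) := by
  have hpf : ∀ y, 0 ≤ p y * f y := fun y => mul_nonneg (hp y) (hf y)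
  have ha0 : 0 ≤ a := ha ▸ Finset.sum_nonneg (fun y _ => hpf y)
  rcases ha0.eq_or_lt with h0 | hpos
  · rw [← h0]
    have hz : ∀ y, p y * f y = 0 := by
      intro y
      have h1 := (Finset.sum_eq_zero_iff_of_nonneg (fun y _ => hpf y)).mp (ha ▸ h0.symm)
      exact h1 y (Finset.mem_univ y)
    simp only [Real.sqrt_zero, sub_zero, zero_mul, zero_add]
    refine Finset.sum_le_sum (fun y _ => ?_)
    rw [Real.sq_sqrt (hf y), ← mul_assoc, hz y]; simp
  · have h1 : ∑ y, p y * (a * Real.log a + (1 + Real.log a) * (f y - a) + (√(f y) - √a) ^ 2)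
        ≤ ∑ y, p y * (f y * Real.log (f y)) :=
      Finset.sum_le_sum (fun y _ => mul_le_mul_of_nonneg_left (phi_tangent hpos (hf y)) (hp y))
    have h2 : ∑ y, p y * (a * Real.log a + (1 + Real.log a) * (f y - a) + (√(f y) - √a) ^ 2)
        = (∑ y, p y) * (a * Real.log a) + (1 + Real.log a) * (∑ y, p y * f y - (∑ y, p y) * a)
          + ∑ y, p y * (√(f y) - √a) ^ 2 := by
      rw [Finset.sum_mul, Finset.sum_mul, ← Finset.sum_sub_distrib, Finset.mul_sum,
        ← Finset.sum_add_distrib, ← Finset.sum_add_distrib]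
      exact Finset.sum_congr rfl (fun y _ => by ring)
    rw [hs, ← ha] at h2
    linarith

section Chain
variable {V : Type*} [Fintype V] [DecidableEq V] (P : Matrix V V ℝ) (E : V → V → Prop)
  [DecidableRel E] (d : ℝ) (C : ℝ)

/-- Entropy functional. -/
noncomputable def Hent (f : V → ℝ) : ℝ := ∑ y, f y * Real.log (f y)

/-- Dirichlet form (ordered pairs). -/
noncomputable def DE (g : V → ℝ) : ℝ := ∑ x, ∑ y, if E x y then (g x - g y) ^ 2 else 0

lemma Hent_nonneg (f : V → ℝ) (hf : ∀ y, 0 ≤ f y) (hs : ∑ y, f y = Fintype.card V) :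
    ∑ y, (√(f y) - 1) ^ 2 ≤ Hent f := by
  have h : ∀ y, (f y - 1) + (√(f y) - 1) ^ 2 ≤ f y * Real.log (f y) := by
    intro y
    have := phi_tangent one_pos (hf y)
    simpa using this
  have h2 := Finset.sum_le_sum (fun y (_ : y ∈ (Finset.univ : Finset V)) => h y)
  rw [Finset.sum_add_distrib, Finset.sum_sub_distrib, hs] at h2
  simp at h2
  exact h2

lemma Hent_step (hd : 0 < d) (hP : ∀ x y, 0 ≤ P x y) (hsymm : ∀ x y, P x y = P y x)
    (hrow : ∀ x, ∑ y, P x y = 1) (hE : ∀ x y, E x y → P x y = 1 / (2 * d))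
    (hdiag : ∀ x, P x x = 1 / 2) (hirr : ∀ x, ¬ E x x)
    (hdeg : ∀ x, ∑ y, (if E x y then (1:ℝ) else 0) = d)
    (f : V → ℝ) (hf : ∀ y, 0 ≤ f y) :
    Hent (P.mulVec f) + 1 / (4 * d) * DE E (fun y => √(f y)) ≤ Hent f := by
  have h1 : ∀ x, (P.mulVec f x) * Real.log (P.mulVec f x)
      + ∑ y, P x y * (√(f y) - √(P.mulVec f x)) ^ 2 ≤ ∑ y, P x y * (f y * Real.log (f y)) := by
    intro x
    exact phi_jensen (P x) f (hP x) (hrow x) hf _ rfl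
  have h2 : ∑ x, ∑ y, P x y * (f y * Real.log (f y)) = Hent f := by
    rw [Finset.sum_comm]
    refine Finset.sum_congr rfl (fun y _ => ?_)
    rw [← Finset.sum_mul]
    have : ∑ x, P x y = 1 := by
      rw [← hrow y]; exact Finset.sum_congr rfl (fun x _ => hsymm x y)
    rw [this, one_mul]
  have h3 : ∀ x, ∀ c : ℝ, 1 / (4 * d) * ∑ y, (if E x y then (√(f x) - √(f y)) ^ 2 else 0)
      ≤ ∑ y, P x y * (√(f y) - c) ^ 2 := by
    intro x c
    have e1 : ∑ y, ((if E x y then 1 / (2 * d) * (√(f y) - c) ^ 2 else 0)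
        + (if y = x then 1 / 2 * (√(f y) - c) ^ 2 else 0)) ≤ ∑ y, P x y * (√(f y) - c) ^ 2 := by
      refine Finset.sum_le_sum (fun y _ => ?_)
      by_cases hxy : E x y
      · have hne : y ≠ x := by rintro rfl; exact hirr _ hxy
        simp [hxy, hne, hE x y hxy]
      · by_cases hyx : y = x
        · subst hyx; simp [hxy, hdiag]
        · simp only [hxy, hyx, if_false, add_zero]
          exact mul_nonneg (hP _ _) (sq_nonneg _)
    refine le_trans ?_ e1
    rw [Finset.sum_add_distrib, Finset.sum_ite_eq' Finset.univ x]
    simp only [Finset.mem_univ, if_true]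
    have e2 : 1 / 2 * (√(f x) - c) ^ 2
        = ∑ y, (if E x y then 1 / (2 * d) * (√(f x) - c) ^ 2 else 0) := by
      have : ∀ y, (if E x y then 1 / (2 * d) * (√(f x) - c) ^ 2 else 0)
          = (if E x y then (1:ℝ) else 0) * (1 / (2 * d) * (√(f x) - c) ^ 2) := by
        intro y; split_ifs <;> simp
      rw [Finset.sum_congr rfl (fun y _ => this y), ← Finset.sum_mul, hdeg]
      field_simp
    rw [e2, ← Finset.sum_add_distrib, Finset.mul_sum]
    refine Finset.sum_le_sum (fun y _ => ?_)
    split_ifs with hxy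
    · have : 1 / (4 * d) * (√(f x) - √(f y)) ^ 2
        ≤ 1 / (4 * d) * (2 * (√(f y) - c) ^ 2 + 2 * (√(f x) - c) ^ 2) := by
        have : (0:ℝ) < 1 / (4 * d) := by positivity
        refine mul_le_mul_of_nonneg_left ?_ this.le
        nlinarith [sq_nonneg ((√(f x) - c) + (√(f y) - c))]
      refine le_trans this (le_of_eq ?_)
      field_simp; ring
    · simp
  have h4 := Finset.sum_le_sum (fun x (_ : x ∈ (Finset.univ : Finset V)) => h1 x)
  rw [h2, Finset.sum_add_distrib] at h4
  have h5 := Finset.sum_le_sum (fun x (_ : x ∈ (Finset.univ : Finset V)) =>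
    h3 x (√(P.mulVec f x)))
  rw [← Finset.mul_sum] at h5
  unfold Hent DE at *
  linarith

lemma chain_bound (hd : 0 < d) (hC : 0 < C) (hP : ∀ x y, 0 ≤ P x y) (hsymm : ∀ x y, P x y = P y x)
    (hrow : ∀ x, ∑ y, P x y = 1) (hE : ∀ x y, E x y → P x y = 1 / (2 * d))
    (hdiag : ∀ x, P x x = 1 / 2) (hirr : ∀ x, ¬ E x x)
    (hdeg : ∀ x, ∑ y, (if E x y then (1:ℝ) else 0) = d)
    (hls : ∀ g : V → ℝ, ∑ x, g x ^ 2 * Real.log (g x ^ 2)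
      - (∑ x, g x ^ 2) * Real.log ((∑ x, g x ^ 2) / Fintype.card V) ≤ C * DE E g)
    (x : V) (t : ℕ) :
    ((1 / 2 : ℝ) * ∑ y, |(P ^ t) x y - 1 / (Fintype.card V : ℝ)|) ^ 2
      ≤ Real.exp (- (t / (4 * d * C))) * Real.log (Fintype.card V) := by
  have hV : 0 < Fintype.card V := Fintype.card_pos_iff.mpr ⟨x⟩
  set M : ℝ := (Fintype.card V : ℝ) with hM
  have hM0 : 0 < M := by rw [hM]; exact_mod_cast hV
  have main : ∀ t : ℕ, (∀ y, 0 ≤ M * (P ^ t) x y) ∧ (∑ y, M * (P ^ t) x y = M) ∧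
      Hent (fun y => M * (P ^ t) x y) ≤ Real.exp (- (t / (4 * d * C))) * (M * Real.log M) := by
    intro t
    induction t with
    | zero =>
      refine ⟨?_, ?_, ?_⟩
      · intro y; simp only [pow_zero, Matrix.one_apply]; split_ifs <;> simp [hM0.le]
      · simp [Matrix.one_apply]
      · simp [Hent, Matrix.one_apply]
    | succ t ih =>
      obtain ⟨i1, i2, i3⟩ := ih
      set f := fun y => M * (P ^ t) x y with hf
      have hstep : (fun y => M * (P ^ (t+1)) x y) = P.mulVec f := by
        funext y
        simp only [hf, Matrix.mulVec, dotProduct, pow_succ, Matrix.mul_apply, Finset.mul_sum]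
        refine Finset.sum_congr rfl (fun z _ => ?_)
        rw [hsymm y z]; ring
      have hstep' : ∀ y, M * (P ^ (t+1)) x y = P.mulVec f y := fun y => congrFun hstep y
      refine ⟨?_, ?_, ?_⟩
      · intro y; rw [hstep' y]
        exact Finset.sum_nonneg (fun z _ => mul_nonneg (hP _ _) (i1 z))
      · rw [Finset.sum_congr rfl (fun y _ => hstep' y)]
        change ∑ y, ∑ z, P y z * f z = M
        rw [Finset.sum_comm, ← i2]
        refine Finset.sum_congr rfl (fun z _ => ?_)
        rw [← Finset.sum_mul]
        have : ∑ y, P y z = 1 := by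
          rw [← hrow z]; exact Finset.sum_congr rfl (fun y _ => hsymm y z)
        rw [this, one_mul]
      · rw [hstep]
        have s := Hent_step P E d hd hP hsymm hrow hE hdiag hirr hdeg f i1
        have l := hls (fun y => √(f y))
        have l1 : ∑ y, f y = M := i2
        have l2 : Hent f ≤ C * DE E (fun y => √(f y)) := by
          have e : ∀ y, √(f y) ^ 2 = f y := fun y => Real.sq_sqrt (i1 y)
          simp only [e] at l
          rw [l1, div_self hM0.ne', Real.log_one, mul_zero, sub_zero] at l
          exact l
        have hpos : 0 ≤ Hent f :=
          le_trans (Finset.sum_nonneg (fun _ _ => sq_nonneg _)) (Hent_nonneg f i1 i2)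
        have l3 : Hent f / (4 * d * C) ≤ 1 / (4 * d) * DE E (fun y => √(f y)) := by
          rw [div_le_iff₀ (by positivity)]
          have : 1 / (4 * d) * DE E (fun y => √(f y)) * (4 * d * C) = C * DE E (fun y => √(f y)) := by
            field_simp
          rw [this]; exact l2
        have l4 : Hent (P.mulVec f) ≤ (1 - 1 / (4 * d * C)) * Hent f := by
          have : (1 - 1 / (4 * d * C)) * Hent f = Hent f - Hent f / (4 * d * C) := by ring
          linarith
        have l5 : 1 - 1 / (4 * d * C) ≤ Real.exp (-(1 / (4 * d * C))) := by
          have := Real.add_one_le_exp (-(1 / (4 * d * C)))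
          linarith
        calc Hent (P.mulVec f) ≤ (1 - 1 / (4 * d * C)) * Hent f := l4
          _ ≤ Real.exp (-(1 / (4 * d * C))) * Hent f := by gcongr
          _ ≤ Real.exp (-(1 / (4 * d * C))) *
              (Real.exp (- (t / (4 * d * C))) * (M * Real.log M)) := by gcongr
          _ = Real.exp (- (((t+1 : ℕ):ℝ) / (4 * d * C))) * (M * Real.log M) := by
            rw [← mul_assoc, ← Real.exp_add]; congr 2; push_cast; ring
  obtain ⟨i1, i2, i3⟩ := main t
  set f := fun y => M * (P ^ t) x y with hf
  have e1 : ∑ y, |(P ^ t) x y - 1 / M| = (∑ y, |√(f y) - 1| * |√(f y) + 1|) / M := by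
    rw [Finset.sum_div]
    refine Finset.sum_congr rfl (fun y _ => ?_)
    rw [← abs_mul]
    have : (√(f y) - 1) * (√(f y) + 1) = f y - 1 := by
      have := Real.sq_sqrt (i1 y)
      have e : √(f y) ^ 2 = f y := this
      linear_combination e
    rw [this, ← abs_of_pos hM0, ← abs_div, abs_of_pos hM0]
    congr 1
    simp only [hf]; field_simp
  have e2 := Finset.sum_mul_sq_le_sq_mul_sq Finset.univ (fun y => |√(f y) - 1|) (fun y => |√(f y) + 1|)
  simp only [sq_abs] at e2
  have e3 : ∑ y, (√(f y) + 1) ^ 2 ≤ 4 * M := by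
    have : ∑ y, (√(f y) + 1) ^ 2 ≤ ∑ y, (2 * f y + 2) := by
      refine Finset.sum_le_sum (fun y _ => ?_)
      have e : √(f y) ^ 2 = f y := Real.sq_sqrt (i1 y)
      nlinarith [sq_nonneg (√(f y) - 1)]
    rw [Finset.sum_add_distrib, ← Finset.mul_sum] at this
    have l1 : ∑ y, f y = M := i2
    rw [l1] at this
    simp at this
    linarith
  have e4 := Hent_nonneg f i1 i2
  have e5 : (∑ y, |√(f y) - 1| * |√(f y) + 1|) ^ 2 ≤ Hent f * (4 * M) := by
    refine le_trans e2 (mul_le_mul e4 e3 (Finset.sum_nonneg (fun _ _ => sq_nonneg _)) ?_)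
    exact le_trans (Finset.sum_nonneg (fun _ _ => sq_nonneg _)) e4
  rw [e1]
  calc (1 / 2 * ((∑ y, |√(f y) - 1| * |√(f y) + 1|) / M)) ^ 2
      = (∑ y, |√(f y) - 1| * |√(f y) + 1|) ^ 2 / (4 * M ^ 2) := by ring
    _ ≤ Hent f * (4 * M) / (4 * M ^ 2) := by gcongr
    _ = Hent f / M := by field_simp
    _ ≤ (Real.exp (- (t / (4 * d * C))) * (M * Real.log M)) / M := by gcongr
    _ = _ := by field_simp

end Chain

lemma numeric (n t : ℕ) (hn : 2 ≤ n) (M : ℝ) (hM0 : 1 ≤ M) (hM : M ≤ 2 ^ (2*n+1))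
    (ht : 33600 * (n:ℝ) ^ 3 * Real.log n ^ 3 ≤ t) :
    Real.exp (- (t / (4 * ((n:ℝ) - 1) * (64 * (2*n+1) ^ 2)))) * Real.log M ≤ (1/4) ^ 2 := by
  have hn' : (2:ℝ) ≤ n := by exact_mod_cast hn
  have hlogM : Real.log M ≤ 2*n+1 := by
    calc Real.log M ≤ Real.log (2 ^ (2*n+1)) := Real.log_le_log (by linarith) hM
      _ = (2*n+1) * Real.log 2 := by rw [Real.log_pow]; push_cast; ring
      _ ≤ (2*n+1) * 1 := by
        gcongr; have := Real.log_two_lt_d9; linarith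
      _ = _ := by ring
  have hlog2 : (0.69:ℝ) ≤ Real.log n := by
    have := Real.log_two_gt_d9
    have := Real.log_le_log (by norm_num : (0:ℝ) < 2) hn'
    linarith
  set L := Real.log n with hL
  have h7 : Real.log (16 * (2*n+1)) ≤ 7 * L := by
    have : (7:ℝ) * L = Real.log ((n:ℝ) ^ 7) := by rw [Real.log_pow]; push_cast; rfl
    rw [this]
    apply Real.log_le_log (by positivity)
    have : (2:ℝ) ^ 6 ≤ (n:ℝ) ^ 6 := by gcongr
    have : (64:ℝ) * n ≤ (n:ℝ) ^ 6 * n := by gcongr; linarith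
    have e : (n:ℝ) ^ 7 = (n:ℝ) ^ 6 * n := by ring
    rw [e]; linarith
  have hκ : 4 * ((n:ℝ) - 1) * (64 * (2*n+1) ^ 2) ≤ 1600 * n ^ 3 := by
    have a : (2*(n:ℝ)+1) ≤ 5/2 * n := by linarith
    calc 4 * ((n:ℝ) - 1) * (64 * (2*n+1) ^ 2) ≤ 4 * (n:ℝ) * (64 * (5/2 * n) ^ 2) := by
          gcongr; linarith
      _ = _ := by ring
  have hκ0 : 0 < 4 * ((n:ℝ) - 1) * (64 * (2*n+1) ^ 2) := by
    have : 0 < (n:ℝ) - 1 := by linarith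
    positivity
  have hL3 : 7 * L ≤ 21 * L ^ 3 := by nlinarith [sq_nonneg L, mul_pos (by linarith : 0 < L) (by linarith : 0 < L)]
  have ht2 : Real.log (16 * (2*n+1)) ≤ t / (4 * ((n:ℝ) - 1) * (64 * (2*n+1) ^ 2)) := by
    rw [le_div_iff₀ hκ0]
    have hl0 : 0 ≤ 21 * L ^ 3 := by
      have : 0 < L := by linarith
      positivity
    calc Real.log (16 * (2*n+1)) * (4 * ((n:ℝ) - 1) * (64 * (2*n+1) ^ 2))
        ≤ (21 * L ^ 3) * (1600 * n ^ 3) := by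
          apply mul_le_mul (by linarith) hκ hκ0.le hl0
      _ = 33600 * (n:ℝ) ^ 3 * L ^ 3 := by ring
      _ ≤ t := ht
  have hexp : Real.exp (- (t / (4 * ((n:ℝ) - 1) * (64 * (2*n+1) ^ 2)))) ≤ 1 / (16 * (2*n+1)) := by
    calc _ ≤ Real.exp (- Real.log (16 * (2*n+1))) := by
          apply Real.exp_le_exp.mpr; linarith
      _ = _ := by rw [Real.exp_neg, Real.exp_log (by positivity)]; simp
  calc _ ≤ 1 / (16 * (2*n+1)) * (2*(n:ℝ)+1) := by
        apply mul_le_mul hexp hlogM (Real.log_nonneg hM0) (by positivity)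
    _ = (1/4) ^ 2 := by field_simp; norm_num

end FlipWalk


namespace FlipWalk

/-- Proper crossing of two chords. -/
def Cr (a b c d : ℕ) : Prop := (a < c ∧ c < b ∧ b < d) ∨ (c < a ∧ a < d ∧ d < b)

lemma Cr.symm {a b c d : ℕ} (h : Cr a b c d) : Cr c d a b := by
  unfold Cr at *; omega

lemma TriQ.ncr {Q : ℕ → Prop} {R : Finset (ℕ × ℕ)} (h : TriQ Q R) {a b c d : ℕ}
    (h1 : (a, b) ∈ R) (h2 : (c, d) ∈ R) : ¬ Cr a b c d := by
  rintro (⟨x, y, z⟩ | ⟨x, y, z⟩)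
  · exact h.nc _ _ _ _ h1 h2 x y z
  · exact h.nc _ _ _ _ h2 h1 x y z

lemma TriQ.mxr {Q : ℕ → Prop} {R : Finset (ℕ × ℕ)} (h : TriQ Q R) {a b : ℕ} (hab : a < b)
    (ha : Q a) (hb : Q b) (hh : ∀ c d, (c, d) ∈ R → ¬ Cr a b c d) : (a, b) ∈ R := by
  refine h.mx a b hab ha hb (fun c d hcd => ?_)
  have := hh c d hcd
  unfold Cr at this
  tauto

section
variable {n : ℕ} {R : Finset (ℕ × ℕ)}

lemma apex (h : TriQ (fun q => q ≤ n + 1) R) {a b : ℕ} (hab : (a, b) ∈ R) (h2 : a + 2 ≤ b) :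
    ∃ m, a < m ∧ m < b ∧ (a, m) ∈ R ∧ (m, b) ∈ R := by
  classical
  have hb := h.memR _ _ hab
  have hs : (a, a+1) ∈ R := h.side (by omega) (by omega) (by omega) (by intros; omega)
  obtain ⟨m, hm, hmax⟩ := Finset.exists_max_image ((Finset.range b).filter (fun j => a < j ∧ (a, j) ∈ R)) id
    ⟨a+1, by simp only [Finset.mem_filter, Finset.mem_range]; exact ⟨by omega, by omega, hs⟩⟩
  simp only [Finset.mem_filter, Finset.mem_range, id] at hm hmax
  obtain ⟨hm1, hm2, hm3⟩ := hm
  refine ⟨m, hm2, hm1, hm3, h.mxr hm1 (by omega) (by omega) (fun c d hcd hcr => ?_)⟩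
  have n1 := h.ncr hab hcd
  have n2 := h.ncr hm3 hcd
  have n3 := hmax d
  have : a = c → (a, d) ∈ R := by rintro rfl; exact hcd
  unfold Cr at *
  by_cases hac : a = c
  · have := n3 
    have h4 : d < b → d ≤ m := fun hd => n3 ⟨hd, by omega, by simpa [hac] using hcd⟩
    omega
  · omega

/-- The two diagonals of a quadrilateral of `R`. -/
def Quad (R : Finset (ℕ × ℕ)) (e e' : ℕ × ℕ) : Prop :=
  ∃ i j k l, i < j ∧ j < k ∧ k < l ∧ (i, j) ∈ R ∧ (j, k) ∈ R ∧ (k, l) ∈ R ∧ (i, l) ∈ R ∧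
    ((e = (i, k) ∧ e' = (j, l)) ∨ (e = (j, l) ∧ e' = (i, k)))

lemma exists_quad (h : TriQ (fun q => q ≤ n + 1) R) {a b : ℕ} (hab : (a, b) ∈ R) (h2 : a + 2 ≤ b)
    (hroot : ¬ (a = 0 ∧ b = n + 1)) : ∃ e', Quad R (a, b) e' := by
  classical
  have hb := h.memR _ _ hab
  obtain ⟨m, hm1, hm2, hm3, hm4⟩ := apex h hab h2
  have key : (∃ d, b < d ∧ (a, d) ∈ R) ∨ (∃ c, c < a ∧ (c, b) ∈ R) := by
    have hr : (0, n+1) ∈ R := h.mxr (by omega) (by omega) (by omega) (by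
      intro c d hcd hc
      have := h.memR _ _ hcd
      unfold Cr at hc; omega)
    obtain ⟨⟨c, d⟩, hcd, hmin⟩ := Finset.exists_min_image
      (R.filter (fun p => p.1 ≤ a ∧ b ≤ p.2 ∧ p ≠ (a, b))) (fun p => p.2 - p.1)
      ⟨(0, n+1), by
        simp only [Finset.mem_filter, ne_eq, Prod.mk.injEq]
        exact ⟨hr, by omega, by omega, by omega⟩⟩
    simp only [Finset.mem_filter, ne_eq, Prod.mk.injEq, and_imp, Prod.forall] at hcd hmin
    obtain ⟨hcd, h3, h4, h5⟩ := hcd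
    obtain ⟨q, q1, q2, q3, q4⟩ := apex h hcd (by omega)
    have m1 := hmin _ _ q3
    have m2 := hmin _ _ q4
    by_cases c1 : q ≤ a
    · have : q = a ∧ d = b := by
        by_contra hne
        have := m2 (by omega) (by omega) (by omega)
        omega
      obtain ⟨rfl, rfl⟩ := this
      exact Or.inr ⟨c, q1, hcd⟩
    by_cases c2 : b ≤ q
    · have : c = a ∧ q = b := by
        by_contra hne
        have := m1 (by omega) (by omega) (by omega)
        omega
      obtain ⟨rfl, rfl⟩ := this
      exact Or.inl ⟨d, q2, hcd⟩
    exfalso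
    have n1 := h.ncr hab q3
    have n2 := h.ncr hab q4
    unfold Cr at n1 n2
    omega
  rcases key with ⟨d, hd⟩ | ⟨c, hc⟩
  · have hex : ∃ d, b < d ∧ (a, d) ∈ R := ⟨d, hd⟩
    obtain ⟨p1, p2⟩ := Nat.find_spec hex
    have hmin : ∀ x, b < x → (a, x) ∈ R → Nat.find hex ≤ x := fun x h1 h2 => Nat.find_min' hex ⟨h1, h2⟩
    set p := Nat.find hex
    have hp := h.memR _ _ p2
    have hbp : (b, p) ∈ R := by
      refine h.mxr p1 (by omega) (by omega) (fun c d hcd hcr => ?_)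
      have n1 := h.ncr hab hcd
      have n2 := h.ncr p2 hcd
      unfold Cr at *
      by_cases hac : c = a
      · have h4 : b < d → p ≤ d := fun hx => hmin d hx (by simpa [hac] using hcd)
        omega
      · omega
    exact ⟨(m, p), a, m, b, p, hm1, hm2, p1, hm3, hm4, hbp, p2, Or.inl ⟨rfl, rfl⟩⟩
  · obtain ⟨p, hp, hmax⟩ := Finset.exists_max_image ((Finset.range a).filter (fun j => (j, b) ∈ R)) id
      ⟨c, by simpa using hc⟩
    simp only [Finset.mem_filter, Finset.mem_range, id] at hp hmax
    obtain ⟨p1, p2⟩ := hp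
    have hpa : (p, a) ∈ R := by
      refine h.mxr p1 (by omega) (by omega) (fun c d hcd hcr => ?_)
      have n1 := h.ncr hab hcd
      have n2 := h.ncr p2 hcd
      unfold Cr at *
      by_cases hac : d = b
      · have h4 : c < a → c ≤ p := fun hx => hmax c ⟨hx, by simpa [hac] using hcd⟩
        omega
      · omega
    exact ⟨(p, m), p, a, m, b, p1, hm1, hm2, hpa, hm3, hm4, p2, Or.inr ⟨rfl, rfl⟩⟩

lemma quad_omega {i j k l x y : ℕ} (h1 : i < j) (h2 : j < k) (h3 : k < l) (hxy : x < y)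
    (a : ¬ Cr x y i j) (b : ¬ Cr x y j k) (c : ¬ Cr x y k l) (d : ¬ Cr x y i l) :
    (Cr x y i k → x = j ∧ y = l) ∧ (Cr x y j l → x = i ∧ y = k) := by
  unfold Cr at *
  omega

/-- Main property of a quadrilateral. -/
lemma Quad.spec {e e' : ℕ × ℕ} (h : Quad R e e') : e.1 < e.2 ∧ e'.1 < e'.2 ∧
    Cr e.1 e.2 e'.1 e'.2 ∧
    ((∀ x y, x < y → (∀ f ∈ R, f ≠ e → ¬ Cr x y f.1 f.2) → Cr x y e.1 e.2 → (x, y) = e') ∧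
    (∀ x y, x < y → (∀ f ∈ R, f ≠ e → ¬ Cr x y f.1 f.2) → Cr x y e'.1 e'.2 → (x, y) = e)) := by
  obtain ⟨i, j, k, l, h1, h2, h3, a, b, c, d, ⟨rfl, rfl⟩ | ⟨rfl, rfl⟩⟩ := h
  · refine ⟨by simp; omega, by simp; omega, by unfold Cr; simp; omega, ?_, ?_⟩ <;> intro x y hxy hf hcr
    all_goals
      have q := quad_omega h1 h2 h3 hxy (hf _ a (by simp; omega)) (hf _ b (by simp; omega))
        (hf _ c (by simp; omega)) (hf _ d (by simp; omega))
      simp only [Prod.mk.injEq]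
    · exact q.1 hcr
    · exact q.2 hcr
  · refine ⟨by simp; omega, by simp; omega, by unfold Cr; simp; omega, ?_, ?_⟩ <;> intro x y hxy hf hcr
    all_goals
      have q := quad_omega h1 h2 h3 hxy (hf _ a (by simp; omega)) (hf _ b (by simp; omega))
        (hf _ c (by simp; omega)) (hf _ d (by simp; omega))
      simp only [Prod.mk.injEq]
    · exact q.2 hcr
    · exact q.1 hcr

lemma Quad.le {e e' : ℕ × ℕ} (h : Quad R e e') (hR : TriQ (fun q => q ≤ n + 1) R) :
    e'.1 ≤ n + 1 ∧ e'.2 ≤ n + 1 := by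
  obtain ⟨i, j, k, l, h1, h2, h3, a, b, c, d, ⟨rfl, rfl⟩ | ⟨rfl, rfl⟩⟩ := h <;>
  · have := hR.memR _ _ d
    simp only
    omega

lemma flip_tri (h : TriQ (fun q => q ≤ n + 1) R) {e e' : ℕ × ℕ} (he : e ∈ R) (hq : Quad R e e') :
    TriQ (fun q => q ≤ n + 1) (insert e' (R.erase e)) ∧ e' ∉ R := by
  obtain ⟨s1, s2, s3, s4, s5⟩ := hq.spec
  obtain ⟨l1, l2⟩ := hq.le h
  have hn : ∀ c d, (c, d) ∈ R → (c, d) ≠ e → ¬ Cr c d e'.1 e'.2 := by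
    intro c d hcd hne hcr
    refine hne (s5 c d (h.lt _ _ hcd) (fun f hf _ => h.ncr hcd hf) hcr)
  refine ⟨⟨?_, ?_, ?_, ?_, ?_⟩, fun hh => h.ncr he hh s3⟩
  · intro a b hab
    rcases Finset.mem_insert.1 hab with hab | hab
    · rw [← hab] at s2; exact s2
    · exact h.lt _ _ (Finset.mem_of_mem_erase hab)
  · intro a b hab
    rcases Finset.mem_insert.1 hab with hab | hab
    · rw [← hab] at l1; exact l1
    · exact h.memL _ _ (Finset.mem_of_mem_erase hab)
  · intro a b hab
    rcases Finset.mem_insert.1 hab with hab | hab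
    · rw [← hab] at l2; exact l2
    · exact h.memR _ _ (Finset.mem_of_mem_erase hab)
  · intro a b c d hab hcd h1 h2 h3
    have hc : Cr a b c d := Or.inl ⟨h1, h2, h3⟩
    rcases Finset.mem_insert.1 hab with hab | hab <;> rcases Finset.mem_insert.1 hcd with hcd | hcd
    · rw [← hcd] at hab; simp at hab; omega
    · rw [Finset.mem_erase] at hcd
      rw [← hab] at hn
      exact hn _ _ hcd.2 hcd.1 hc.symm
    · rw [Finset.mem_erase] at hab
      rw [← hcd] at hn
      exact hn _ _ hab.2 hab.1 hc
    · exact h.nc _ _ _ _ (Finset.mem_of_mem_erase hab) (Finset.mem_of_mem_erase hcd) h1 h2 h3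
  · intro a b hab ha hb hh
    have hh' : ∀ f ∈ insert e' (R.erase e), ¬ Cr a b f.1 f.2 := by
      intro f hf
      have := hh f.1 f.2 hf
      unfold Cr; tauto
    have hf : ∀ f ∈ R, f ≠ e → ¬ Cr a b f.1 f.2 := fun f hf hne =>
      hh' f (Finset.mem_insert_of_mem (Finset.mem_erase.2 ⟨hne, hf⟩))
    by_cases hc : Cr a b e.1 e.2
    · rw [s4 a b hab hf hc]; exact Finset.mem_insert_self _ _
    · refine Finset.mem_insert_of_mem (Finset.mem_erase.2 ⟨?_, ?_⟩)
      · rintro rfl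
        exact hh' _ (Finset.mem_insert_self _ _) s3
      · refine h.mxr hab ha hb (fun c d hcd => ?_)
        by_cases hce : (c, d) = e
        · rw [← hce] at hc; exact hc
        · exact hf _ hcd hce

lemma flip_uniq (h : TriQ (fun q => q ≤ n + 1) R) {S : Finset (ℕ × ℕ)}
    (hS : TriQ (fun q => q ≤ n + 1) S) {e e' f : ℕ × ℕ} (hq : Quad R e e')
    (h1 : R \ S = {e}) (h2 : S \ R = {f}) : f = e' := by
  obtain ⟨s1, s2, s3, s4, s5⟩ := hq.spec
  have hf : f ∈ S \ R := by rw [h2]; simp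
  rw [Finset.mem_sdiff] at hf
  have hmem : ∀ g ∈ R, g ≠ e → g ∈ S := by
    intro g hg hne
    by_contra hgs
    have : g ∈ R \ S := Finset.mem_sdiff.2 ⟨hg, hgs⟩
    rw [h1] at this
    exact hne (Finset.mem_singleton.1 this)
  have hnf : ∀ g ∈ R, g ≠ e → ¬ Cr f.1 f.2 g.1 g.2 := fun g hg hne => hS.ncr hf.1 (hmem g hg hne)
  have hlt := hS.lt _ _ hf.1
  refine s4 f.1 f.2 hlt hnf ?_
  by_contra hc
  refine hf.2 (h.mxr hlt (hS.memL _ _ hf.1) (hS.memR _ _ hf.1) (fun c d hcd => ?_))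
  by_cases hce : (c, d) = e
  · rw [← hce] at hc; exact hc
  · exact hnf _ hcd hce

end

end FlipWalk


namespace FlipWalk

lemma fin_sub_val {m : ℕ} (a b : Fin m) :
    ((b - a).val : ℕ) = if a.val ≤ b.val then b.val - a.val else b.val + m - a.val := by
  split_ifs with h
  · exact Fin.coe_sub_iff_le.2 h
  · have := (Fin.coe_sub_iff_lt (a := b) (b := a)).2 (by rw [Fin.lt_def]; omega)
    rw [this]; omega

lemma cycBtw_iff {m : ℕ} (a b x : Fin m) : CycBtw a b x ↔
    (a.val < x.val ∧ x.val < b.val) ∨ (b.val < a.val ∧ a.val < x.val) ∨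
      (b.val < a.val ∧ x.val < b.val) := by
  unfold CycBtw
  rw [fin_sub_val, fin_sub_val]
  have := a.isLt
  have := b.isLt
  have := x.isLt
  split_ifs <;> omega

lemma xor_iff {p q : Prop} : Xor' p q ↔ ((p ∧ ¬ q) ∨ (q ∧ ¬ p)) := Iff.rfl

lemma crosses_iff {m : ℕ} (a b c d : Fin m) (h1 : a < b) (h2 : c < d) :
    Crosses s(a, b) s(c, d) ↔ Cr a.val b.val c.val d.val := by
  rw [Fin.lt_def] at h1 h2
  constructor
  · intro h
    obtain ⟨x, y, hxy, hx⟩ := h a b rfl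
    obtain ⟨x', y', hxy', hx'⟩ := h b a Sym2.eq_swap
    rw [xor_iff] at hx hx'
    simp only [cycBtw_iff] at hx hx'
    rw [Sym2.eq_iff] at hxy hxy'
    unfold Cr
    rcases hxy with ⟨rfl, rfl⟩ | ⟨rfl, rfl⟩ <;> rcases hxy' with ⟨rfl, rfl⟩ | ⟨rfl, rfl⟩ <;> omega
  · intro h x y hxy
    refine ⟨c, d, rfl, ?_⟩
    rw [xor_iff]
    simp only [cycBtw_iff]
    unfold Cr at h
    rw [Sym2.eq_iff] at hxy
    rcases hxy with ⟨rfl, rfl⟩ | ⟨rfl, rfl⟩ <;> omega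

lemma isDiagonal_iff {n : ℕ} (a b : Fin (n+2)) (h1 : a < b) :
    IsDiagonal s(a, b) ↔ b.val ≠ a.val + 1 ∧ ¬ (a.val = 0 ∧ b.val = n + 1) := by
  rw [Fin.lt_def] at h1
  have ha := a.isLt
  have hb := b.isLt
  have hP : ∀ x y : Fin (n+2), PolyAdj x y ↔ (y.val = x.val + 1 ∨ x.val = y.val + 1 ∨
      (x.val = 0 ∧ y.val = n+1) ∨ (y.val = 0 ∧ x.val = n + 1)) := by
    intro x y
    unfold PolyAdj
    rw [fin_sub_val, fin_sub_val]
    have := x.isLt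
    have := y.isLt
    split_ifs <;> omega
  constructor
  · rintro ⟨_, h⟩
    have := h a b rfl
    rw [hP] at this
    omega
  · intro h
    refine ⟨?_, ?_⟩
    · rw [Sym2.mk_isDiag_iff]; rintro rfl; omega
    · intro x y hxy
      rw [hP]
      rw [Sym2.eq_iff] at hxy
      rcases hxy with ⟨rfl, rfl⟩ | ⟨rfl, rfl⟩ <;> omega

/-- The chord as an ordered pair of numbers. -/
def pr {m : ℕ} (e : Sym2 (Fin m)) : ℕ × ℕ := (e.inf.val, e.sup.val)

lemma pr_mk {m : ℕ} (a b : Fin m) (h : a < b) : pr s(a, b) = (a.val, b.val) := by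
  simp [pr, inf_eq_left.2 h.le, sup_eq_right.2 h.le]

lemma exists_rep {m : ℕ} (e : Sym2 (Fin m)) (h : ¬ e.IsDiag) : ∃ a b : Fin m, a < b ∧ e = s(a, b) := by
  induction e using Sym2.ind with
  | _ x y =>
    rw [Sym2.mk_isDiag_iff] at h
    rcases lt_or_gt_of_ne h with h | h
    · exact ⟨x, y, h, rfl⟩
    · exact ⟨y, x, h, Sym2.eq_swap⟩

lemma pr_inj {m : ℕ} : Function.Injective (pr (m := m)) := by
  intro e f h
  induction e using Sym2.ind with
  | _ x y =>
  induction f using Sym2.ind with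
  | _ z w =>
    simp only [pr, Sym2.inf_mk, Sym2.sup_mk, Prod.mk.injEq, ← Fin.ext_iff] at h
    rw [Sym2.eq_iff]
    rcases le_total x y with h1 | h1 <;> rcases le_total z w with h2 | h2 <;>
      simp only [h1, h2, inf_eq_left.2, sup_eq_right.2, inf_eq_right.2, sup_eq_left.2] at h <;> tauto

/-- Sides of the polygon. -/
def sides (n : ℕ) : Finset (ℕ × ℕ) := insert (0, n+1) ((Finset.range (n+1)).image (fun i => (i, i+1)))

lemma mem_sides {n a b : ℕ} : (a, b) ∈ sides n ↔ (a = 0 ∧ b = n+1) ∨ (b = a + 1 ∧ a ≤ n) := by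
  simp only [sides, Finset.mem_insert, Prod.mk.injEq, Finset.mem_image, Finset.mem_range]
  constructor
  · rintro (h | ⟨i, h1, h2, h3⟩) <;> omega
  · rintro (h | h)
    · exact Or.inl h
    · exact Or.inr ⟨a, by omega, rfl, by omega⟩

lemma card_sides {n : ℕ} (hn : 1 ≤ n) : (sides n).card = n + 2 := by
  rw [sides, Finset.card_insert_of_notMem, Finset.card_image_of_injective, Finset.card_range]
  · intro a b h; simpa using h
  · simp; omega

/-- All chords of a triangulation, with the sides. -/
def toT (n : ℕ) (t : Finset (Sym2 (Fin (n+2)))) : Finset (ℕ × ℕ) := t.image pr ∪ sides n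

section
variable {n : ℕ} {t : Finset (Sym2 (Fin (n+2)))}

lemma mem_toT {a b : ℕ} (ht : ∀ e ∈ t, IsDiagonal e) : (a, b) ∈ toT n t ↔
    (a, b) ∈ sides n ∨ ∃ x y : Fin (n+2), x < y ∧ s(x, y) ∈ t ∧ a = x.val ∧ b = y.val := by
  rw [toT, Finset.mem_union, Finset.mem_image, or_comm]
  refine or_congr_right ⟨?_, ?_⟩
  · rintro ⟨e, he, hp⟩
    obtain ⟨x, y, hxy, rfl⟩ := exists_rep e (ht e he).1
    rw [pr_mk _ _ hxy] at hp
    simp only [Prod.mk.injEq] at hp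
    exact ⟨x, y, hxy, he, hp.1.symm, hp.2.symm⟩
  · rintro ⟨x, y, hxy, he, rfl, rfl⟩
    exact ⟨_, he, pr_mk _ _ hxy⟩

lemma toT_disj (ht : ∀ e ∈ t, IsDiagonal e) : Disjoint (t.image pr) (sides n) := by
  rw [Finset.disjoint_left]
  intro p hp hs
  obtain ⟨e, he, rfl⟩ := Finset.mem_image.1 hp
  have hd := ht e he
  obtain ⟨x, y, hxy, rfl⟩ := exists_rep e hd.1
  rw [isDiagonal_iff _ _ hxy] at hd
  rw [pr_mk _ _ hxy, mem_sides] at hs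
  omega

lemma toT_sdiff {s : Finset (Sym2 (Fin (n+2)))} (ht : ∀ e ∈ t, IsDiagonal e) :
    toT n t \ toT n s = (t \ s).image pr := by
  rw [Finset.image_sdiff _ _ pr_inj]
  have := Finset.disjoint_left.1 (toT_disj ht)
  ext p
  have := @this p
  simp only [toT, Finset.mem_sdiff, Finset.mem_union]
  tauto

lemma toT_tri (h : IsTriangulation n t) : TriQ (fun q => q ≤ n + 1) (toT n t) := by
  obtain ⟨h1, h2, h3⟩ := h
  refine ⟨?_, ?_, ?_, ?_, ?_⟩
  · intro a b hab
    rw [mem_toT h1, mem_sides] at hab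
    rcases hab with h | ⟨x, y, hxy, _, rfl, rfl⟩
    · omega
    · exact hxy
  · intro a b hab
    rw [mem_toT h1, mem_sides] at hab
    rcases hab with h | ⟨x, y, hxy, _, rfl, rfl⟩
    · omega
    · have := x.isLt; omega
  · intro a b hab
    rw [mem_toT h1, mem_sides] at hab
    rcases hab with h | ⟨x, y, hxy, _, rfl, rfl⟩
    · omega
    · have := y.isLt; omega
  · intro a b c d hab hcd x1 x2 x3
    rw [mem_toT h1, mem_sides] at hab hcd
    rcases hab with h | ⟨x, y, hxy, he, rfl, rfl⟩
    · rcases hcd with h' | ⟨x, y, hxy, he, rfl, rfl⟩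
      · omega
      · have := y.isLt; omega
    · rcases hcd with h' | ⟨x', y', hxy', he', rfl, rfl⟩
      · omega
      · exact h2 _ he _ he' ((crosses_iff _ _ _ _ hxy hxy').2 (Or.inl ⟨x1, x2, x3⟩))
  · intro a b hab ha hb hh
    rw [mem_toT h1]
    by_cases hs : (a, b) ∈ sides n
    · exact Or.inl hs
    right
    rw [mem_sides] at hs
    refine ⟨⟨a, by omega⟩, ⟨b, by omega⟩, hab, ?_, rfl, rfl⟩
    refine h3 _ ((isDiagonal_iff _ _ (by exact hab)).2 (by simp only; omega)) (fun f hf hc => ?_)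
    obtain ⟨x, y, hxy, rfl⟩ := exists_rep f (h1 f hf).1
    rw [crosses_iff _ _ _ _ (by exact hab) hxy] at hc
    have := hh x y ((mem_toT h1).2 (Or.inr ⟨x, y, hxy, hf, rfl, rfl⟩))
    unfold Cr at hc
    tauto

lemma sides_sub {R : Finset (ℕ × ℕ)} (h : TriQ (fun q => q ≤ n + 1) R) {a b : ℕ}
    (hs : (a, b) ∈ sides n) : (a, b) ∈ R := by
  rw [mem_sides] at hs
  refine h.mxr (by omega) (by omega) (by omega) (fun c d hcd hc => ?_)
  have := h.memR _ _ hcd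
  have := h.lt _ _ hcd
  unfold Cr at hc
  omega

lemma exists_toT {R : Finset (ℕ × ℕ)} (h : TriQ (fun q => q ≤ n + 1) R) :
    ∃ t, IsTriangulation n t ∧ toT n t = R := by
  classical
  set t : Finset (Sym2 (Fin (n+2))) := Finset.univ.filter (fun e => IsDiagonal e ∧ pr e ∈ R) with htd
  have hd : ∀ e ∈ t, IsDiagonal e := fun e he => (Finset.mem_filter.1 he).2.1
  have hR : ∀ e ∈ t, pr e ∈ R := fun e he => (Finset.mem_filter.1 he).2.2
  refine ⟨t, ⟨hd, ?_, ?_⟩, ?_⟩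
  · intro e he f hf hc
    obtain ⟨a, b, hab, rfl⟩ := exists_rep e (hd e he).1
    obtain ⟨c, d, hcd, rfl⟩ := exists_rep f (hd f hf).1
    have r1 := hR _ he
    have r2 := hR _ hf
    rw [pr_mk _ _ hab] at r1
    rw [pr_mk _ _ hcd] at r2
    exact h.ncr r1 r2 ((crosses_iff _ _ _ _ hab hcd).1 hc)
  · intro e he hf
    obtain ⟨a, b, hab, rfl⟩ := exists_rep e he.1
    refine Finset.mem_filter.2 ⟨Finset.mem_univ _, he, ?_⟩
    rw [pr_mk _ _ hab]
    have := a.isLt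
    have := b.isLt
    refine h.mxr hab (by omega) (by omega) (fun c d hcd hc => ?_)
    have l1 := h.lt _ _ hcd
    have l2 := h.memR _ _ hcd
    have hcd' : (⟨c, by omega⟩ : Fin (n+2)) < ⟨d, by omega⟩ := l1
    refine hf s(⟨c, by omega⟩, ⟨d, by omega⟩) ?_ ((crosses_iff _ _ _ _ hab hcd').2 hc)
    refine Finset.mem_filter.2 ⟨Finset.mem_univ _, ?_, ?_⟩
    · rw [isDiagonal_iff _ _ hcd']
      simp only
      unfold Cr at hc
      rw [Fin.lt_def] at hab
      omega
    · rw [pr_mk _ _ hcd']; exact hcd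
  · ext ⟨a, b⟩
    rw [mem_toT hd]
    constructor
    · rintro (hs | ⟨x, y, hxy, he, rfl, rfl⟩)
      · exact sides_sub h hs
      · have := hR _ he
        rwa [pr_mk _ _ hxy] at this
    · intro hab
      by_cases hs : (a, b) ∈ sides n
      · exact Or.inl hs
      right
      have l1 := h.lt _ _ hab
      have l2 := h.memR _ _ hab
      have hab' : (⟨a, by omega⟩ : Fin (n+2)) < ⟨b, by omega⟩ := l1
      refine ⟨⟨a, by omega⟩, ⟨b, by omega⟩, l1, ?_, rfl, rfl⟩
      refine Finset.mem_filter.2 ⟨Finset.mem_univ _, ?_, ?_⟩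
      · rw [mem_sides] at hs
        rw [isDiagonal_iff _ _ hab']
        simp only
        omega
      · rw [pr_mk _ _ hab']; exact hab

end

lemma toT_inj {n : ℕ} {s t : Triangulation n} (h : toT n s.val = toT n t.val) : s = t := by
  apply Subtype.ext
  have h1 := toT_sdiff (s := t.val) s.2.1
  have h2 := toT_sdiff (s := s.val) t.2.1
  rw [h, Finset.sdiff_self, eq_comm, Finset.image_eq_empty, Finset.sdiff_eq_empty_iff_subset] at h1
  rw [← h, Finset.sdiff_self, eq_comm, Finset.image_eq_empty, Finset.sdiff_eq_empty_iff_subset] at h2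
  exact Finset.Subset.antisymm h1 h2

lemma adj_iff {n : ℕ} (s t : Triangulation n) : (assocGraph n).Adj s t ↔
    (toT n s.val \ toT n t.val).card = 1 ∧ (toT n t.val \ toT n s.val).card = 1 := by
  rw [toT_sdiff s.2.1, toT_sdiff t.2.1, Finset.card_image_of_injective _ pr_inj,
    Finset.card_image_of_injective _ pr_inj]
  rfl

lemma start_val : Val 0 [0] := ⟨by simp, by simp⟩

lemma start_Q (n q : ℕ) : Qst n 0 [0] q ↔ q ≤ n + 1 := by
  unfold Qst; simp; omega

lemma word_tri (n : ℕ) {w : List Bool} (hw : w ∈ F n 1) :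
    TriQ (fun q => q ≤ n + 1) (dec w 0 [0]) :=
  (dec_tri n w n 0 0 [0] hw rfl start_val (by omega)).congr (start_Q n)

lemma tri_word (n : ℕ) {R : Finset (ℕ × ℕ)} (h : TriQ (fun q => q ≤ n + 1) R) :
    ∃ w ∈ F n 1, dec w 0 [0] = R := by
  refine enc n (2*n) n 0 0 [0] R (by omega) rfl start_val (by omega) (h.congr (fun q => (start_Q n q).symm)) ?_
  intro a b z hab hb
  have := h.lt _ _ hab
  omega

lemma tri_card {n : ℕ} (hn : 1 ≤ n) (t : Triangulation n) : t.val.card = n - 1 := by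
  obtain ⟨w, hw, h⟩ := tri_word n (toT_tri t.2)
  have hc := dec_card w n 0 0 [0] hw rfl start_val
  rw [h, toT, Finset.card_union_of_disjoint (toT_disj t.2.1), card_sides hn,
    Finset.card_image_of_injective _ pr_inj] at hc
  omega

/-- Each diagonal can be flipped, in exactly one way. -/
lemma exists_flip {n : ℕ} (t : Triangulation n) {e : Sym2 (Fin (n+2))} (he : e ∈ t.val) :
    ∃ s : Triangulation n, t.val \ s.val = {e} ∧ (assocGraph n).Adj t s ∧
      ∀ s' : Triangulation n, t.val \ s'.val = {e} → (assocGraph n).Adj t s' → s' = s := by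
  have hT := toT_tri t.2
  have hd := t.2.1 e he
  obtain ⟨a, b, hab, rfl⟩ := exists_rep e hd.1
  have heT : (a.val, b.val) ∈ toT n t.val := (mem_toT t.2.1).2 (Or.inr ⟨a, b, hab, he, rfl, rfl⟩)
  rw [isDiagonal_iff _ _ hab] at hd
  rw [Fin.lt_def] at hab
  obtain ⟨e', hq⟩ := exists_quad hT heT (by omega) hd.2
  obtain ⟨hS, hne⟩ := flip_tri hT heT hq
  obtain ⟨s, hsT⟩ : ∃ s : Triangulation n, toT n s.val = insert e' ((toT n t.val).erase (a.val, b.val)) := by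
    obtain ⟨s, hs, h⟩ := exists_toT hS
    exact ⟨⟨s, hs⟩, h⟩
  have d1 : toT n t.val \ toT n s.val = {(a.val, b.val)} := by
    rw [hsT]
    ext p
    simp only [Finset.mem_sdiff, Finset.mem_insert, Finset.mem_erase, Finset.mem_singleton]
    constructor
    · rintro ⟨h1, h2⟩; tauto
    · rintro rfl
      refine ⟨heT, ?_⟩
      rintro (h | h)
      · exact hne (h ▸ heT)
      · tauto
  have d2 : toT n s.val \ toT n t.val = {e'} := by
    rw [hsT]
    ext p
    simp only [Finset.mem_sdiff, Finset.mem_insert, Finset.mem_erase, Finset.mem_singleton]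
    constructor
    · rintro ⟨h1, h2⟩; tauto
    · rintro rfl
      exact ⟨Or.inl rfl, hne⟩
  have pe : pr s(a, b) = (a.val, b.val) := pr_mk a b hab
  refine ⟨s, ?_, ?_, ?_⟩
  · rw [toT_sdiff t.2.1, ← pe, ← Finset.image_singleton] at d1
    exact Finset.image_injective pr_inj d1
  · rw [adj_iff]
    simp only [d1, d2, Finset.card_singleton, and_self]
  · intro s' h1 h2
    rw [adj_iff] at h2
    have e1 : toT n t.val \ toT n s'.val = {(a.val, b.val)} := by
      rw [toT_sdiff t.2.1, h1, Finset.image_singleton, pe]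
    obtain ⟨f, hf⟩ := Finset.card_eq_one.1 h2.2
    have := flip_uniq hT (toT_tri s'.2) hq e1 hf
    subst this
    apply toT_inj
    ext p
    have x1 := Finset.ext_iff.1 hf p
    have x2 := Finset.ext_iff.1 d2 p
    have x3 := Finset.ext_iff.1 e1 p
    have x4 := Finset.ext_iff.1 d1 p
    simp only [Finset.mem_sdiff] at x1 x2 x3 x4
    tauto

open Classical in
lemma degree_eq {n : ℕ} (hn : 1 ≤ n) (t : Triangulation n) :
    (Finset.univ.filter (fun s => (assocGraph n).Adj t s)).card = n - 1 := by
  rw [← tri_card hn t]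
  choose f hf1 hf2 hf3 using fun (e) (he : e ∈ t.val) => exists_flip t he
  symm
  refine Finset.card_bij f (fun e he => by simpa using hf2 e he) ?_ ?_
  · intro e he e' he' h
    have h1 := hf1 e he
    rw [h, hf1 e' he'] at h1
    exact (Finset.singleton_injective h1).symm
  · intro s hs
    have hs : (assocGraph n).Adj t s := by simpa using hs
    obtain ⟨e, he⟩ := Finset.card_eq_one.1 hs.1
    have hmem : e ∈ t.val \ s.val := by rw [he]; simp
    have hmem := (Finset.mem_sdiff.1 hmem).1
    exact ⟨e, hmem, (hf3 e hmem s he hs).symm⟩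

end FlipWalk


namespace FlipWalk

lemma exists_wd (n : ℕ) : ∃ wd : Triangulation n → List Bool, Function.Injective wd ∧
    (F n 1 = Finset.univ.image wd) ∧ ∀ t, dec (wd t) 0 [0] = toT n t.val := by
  choose wd h1 h2 using fun t : Triangulation n => tri_word n (toT_tri t.2)
  refine ⟨wd, ?_, ?_, h2⟩
  · intro s t h
    apply toT_inj
    rw [← h2, ← h2, h]
  · ext w
    simp only [Finset.mem_image, Finset.mem_univ, true_and]
    constructor
    · intro hw
      obtain ⟨t, ht, hT⟩ := exists_toT (word_tri n hw)
      refine ⟨⟨t, ht⟩, ?_⟩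
      exact dec_inj _ n 0 0 [0] (h1 _) rfl start_val w hw ((h2 _).trans hT)
    · rintro ⟨t, rfl⟩; exact h1 t

lemma adj_of_FP {n : ℕ} {s t : Triangulation n} {w v : List Bool} (hp : (w, v) ∈ FP n 1)
    (hs : dec w 0 [0] = toT n s.val) (ht : dec v 0 [0] = toT n t.val) : (assocGraph n).Adj s t := by
  obtain ⟨_, _, X, i, j, l, r, a, b, c, e1, e2⟩ := FP_dec n 1 0 [0] (w, v) hp rfl start_val
  simp only at e1 e2
  have hS := toT_tri s.2
  have hT := toT_tri t.2
  rw [← hs, e1] at hS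
  rw [← ht, e2] at hT
  have hc : Cr i l j r := Or.inl ⟨a, b, c⟩
  have n1 : (i, l) ∉ insert (j, r) X := fun h => hT.ncr h (Finset.mem_insert_self _ _) hc
  have n2 : (j, r) ∉ insert (i, l) X := fun h => hS.ncr (Finset.mem_insert_self _ _) h hc
  rw [adj_iff, ← hs, ← ht, e1, e2]
  constructor
  · rw [Finset.card_eq_one]
    refine ⟨(i, l), ?_⟩
    ext p
    simp only [Finset.mem_sdiff, Finset.mem_insert, Finset.mem_singleton] at *
    constructor
    · tauto
    · rintro rfl; tauto
  · rw [Finset.card_eq_one]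
    refine ⟨(j, r), ?_⟩
    ext p
    simp only [Finset.mem_sdiff, Finset.mem_insert, Finset.mem_singleton] at *
    constructor
    · tauto
    · rintro rfl; tauto

lemma card_tri (n : ℕ) : (Fintype.card (Triangulation n) : ℝ) = N n 1 := by
  obtain ⟨wd, hi, him, _⟩ := exists_wd n
  rw [N, him, Finset.card_image_of_injective _ hi, Finset.card_univ]

open Classical in
lemma tri_log_sobolev (n : ℕ) (g : Triangulation n → ℝ) :
    ∑ x, g x ^ 2 * Real.log (g x ^ 2)
      - (∑ x, g x ^ 2) * Real.log ((∑ x, g x ^ 2) / Fintype.card (Triangulation n))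
      ≤ (64 * (2*n+1) ^ 2) * DE (assocGraph n).Adj g := by
  obtain ⟨wd, hi, him, hdec⟩ := exists_wd n
  have hls := log_sobolev n 1 (Function.extend wd g 0)
  have hsum : ∀ f : List Bool → ℝ, ∑ w ∈ F n 1, f w = ∑ t, f (wd t) := by
    intro f
    rw [him, Finset.sum_image (fun a _ b _ h => hi h)]
  rw [hsum, hsum, ← card_tri] at hls
  simp only [hi.extend_apply] at hls
  have hX : X2 n 1 (Function.extend wd g 0) ≤ DE (assocGraph n).Adj g := by
    have hsub : FP n 1 ⊆ ((Finset.univ : Finset (Triangulation n × Triangulation n)).filter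
        (fun q => (assocGraph n).Adj q.1 q.2)).image (Prod.map wd wd) := by
      rintro ⟨w, v⟩ hp
      obtain ⟨h1, h2, _⟩ := FP_dec n 1 0 [0] (w, v) hp rfl start_val
      simp only [him, Finset.mem_image, Finset.mem_univ, true_and] at h1 h2
      obtain ⟨s, rfl⟩ := h1
      obtain ⟨t, rfl⟩ := h2
      simp only [Finset.mem_image, Finset.mem_filter, Finset.mem_univ, true_and]
      exact ⟨(s, t), adj_of_FP hp (hdec s) (hdec t), rfl⟩
    unfold X2 DE
    refine (Finset.sum_le_sum_of_subset_of_nonneg hsub (fun _ _ _ => sq_nonneg _)).trans ?_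
    rw [Finset.sum_image (fun a _ b _ h => (hi.prodMap hi) h), Finset.sum_filter, Fintype.sum_prod_type]
    simp only [Prod.map_apply, hi.extend_apply]
    exact le_rfl
  refine hls.trans ?_
  push_cast
  exact mul_le_mul_of_nonneg_left hX (by positivity)

end FlipWalk

theorem triangulation_flip_walk_mixing :
    ∃ A : ℝ, ∀ n : ℕ, 2 ≤ n → ∀ t : ℕ,
      A * (n : ℝ) ^ 3 * Real.log n ^ 3 ≤ (t : ℝ) →
      ∀ x : Triangulation n,
        (1 / 2 : ℝ) * ∑ y : Triangulation n,
            |(flipWalkMatrix n ^ t) x y - 1 / (Nat.card (Triangulation n) : ℝ)|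
          ≤ 1 / 4 := by
  classical
  refine ⟨33600, fun n hn t ht x => ?_⟩
  have hd : (0:ℝ) < (n:ℝ) - 1 := by
    have : (2:ℝ) ≤ n := by exact_mod_cast hn
    linarith
  have hdeg : ∀ x : Triangulation n,
      ∑ y, (if (assocGraph n).Adj x y then (1:ℝ) else 0) = (n:ℝ) - 1 := by
    intro x
    rw [Finset.sum_boole]
    have := FlipWalk.degree_eq (show 1 ≤ n by omega) x
    rw [show (n:ℝ) - 1 = ((n - 1 : ℕ) : ℝ) by rw [Nat.cast_sub (by omega)]; simp]
    exact_mod_cast this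
  have hb := FlipWalk.chain_bound (flipWalkMatrix n) (assocGraph n).Adj ((n:ℝ) - 1)
    (64 * (2*n+1) ^ 2) hd (by positivity)
    (by intro x y; unfold flipWalkMatrix; split_ifs <;> positivity)
    (by
      intro x y
      unfold flipWalkMatrix
      simp only [(assocGraph n).adj_comm x y, eq_comm (a := x) (b := y)])
    (by
      intro x
      have : ∀ y, flipWalkMatrix n x y = (if (assocGraph n).Adj x y then (1:ℝ) else 0) *
          (1 / (2 * ((n:ℝ) - 1))) + (if x = y then 1 / 2 else 0) := by
        intro y
        unfold flipWalkMatrix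
        by_cases h1 : (assocGraph n).Adj x y
        · simp [h1, h1.ne]
        · simp [h1]
      simp only [this]
      rw [Finset.sum_add_distrib, ← Finset.sum_mul, hdeg]
      simp only [Finset.sum_ite_eq, Finset.mem_univ, if_true]
      field_simp
      norm_num)
    (by intro x y h; unfold flipWalkMatrix; simp [h])
    (by intro x; unfold flipWalkMatrix; simp)
    (by intro x; simp) hdeg
    (by
      intro g
      have := FlipWalk.tri_log_sobolev n g
      convert this) x t
  have hnum := FlipWalk.numeric n t hn (Fintype.card (Triangulation n) : ℝ)
    (by
      have : 0 < Fintype.card (Triangulation n) := Fintype.card_pos_iff.mpr ⟨x⟩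
      exact_mod_cast this)
    (by rw [FlipWalk.card_tri]; exact FlipWalk.N_le_pow n 1) ht
  rw [Nat.card_eq_fintype_card]
  exact le_of_sq_le_sq (hb.trans hnum) (by norm_num)
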